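/- Every binary completely regular code of length 16 with minimum distance 6 is completely transitive. -/

import Mathlib

open Set

/-- Distance from a vertex to a code in the binary Hamming space. -/
noncomputable def distToCode {m : ℕ} (C : Set (Fin m → ZMod 2)) (x : Fin m → ZMod 2) : ℕ :=
  sInf {d | ∃ c ∈ C, hammingDist x c = d}

/-- `C` has minimum distance `δ`. -/
def IsMinDist {m : ℕ} (C : Set (Fin m → ZMod 2)) (δ : ℕ) : Prop :=
  (∀ x ∈ C, ∀ y ∈ C, x ≠ y → δ ≤ hammingDist x y) ∧
  ∃ x ∈ C, ∃ y ∈ C, x ≠ y ∧ hammingDist x y = δ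

/-- `C` is completely regular: the number of codewords at distance `k` from `γ`
depends only on `distToCode C γ` and `k`. -/
def IsCompletelyRegular {m : ℕ} (C : Set (Fin m → ZMod 2)) : Prop :=
  ∀ γ γ' : Fin m → ZMod 2, distToCode C γ = distToCode C γ' →
    ∀ k : ℕ, {c ∈ C | hammingDist γ c = k}.ncard = {c ∈ C | hammingDist γ' c = k}.ncard

/-- A permutation of `F_2^m` is an automorphism of the Hamming graph iff it has
the form `x ↦ (x ∘ σ⁻¹) + v` for a coordinate permutation `σ` and `v ∈ F_2^m`. -/
def IsHammingAut {m : ℕ} (f : Equiv.Perm (Fin m → ZMod 2)) : Prop :=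
  ∃ (σ : Equiv.Perm (Fin m)) (v : Fin m → ZMod 2),
    ∀ x : Fin m → ZMod 2, f x = (fun i => x (σ.symm i)) + v

/-- `C` is completely transitive: some group `X` of Hamming-graph automorphisms
preserving `C` has each cell of the distance partition as a single orbit. -/
def IsCompletelyTransitive {m : ℕ} (C : Set (Fin m → ZMod 2)) : Prop :=
  ∃ X : Subgroup (Equiv.Perm (Fin m → ZMod 2)),
    (∀ g ∈ X, IsHammingAut g ∧ ⇑g '' C = C) ∧
    ∀ i : ℕ, ∀ x : Fin m → ZMod 2, distToCode C x = i →
      {y | distToCode C y = i} = {y | ∃ g ∈ X, g x = y}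


set_option linter.unusedSectionVars false

namespace NR
open scoped symmDiff

section local_part
variable {α : Type*} [Fintype α] [DecidableEq α]

lemma sd (x c : Finset α) : (x ∆ c).card + 2 * (x ∩ c).card = x.card + c.card := by
  have h1 : (x ∆ c).card = (x \ c).card + (c \ x).card := by
    rw [symmDiff_def, Finset.sup_eq_union, Finset.card_union_of_disjoint]
    exact disjoint_sdiff_sdiff
  have h2 := Finset.card_sdiff_add_card_inter x c
  have h3 := Finset.card_sdiff_add_card_inter c x
  rw [Finset.inter_comm c x] at h3
  omega

lemma sde (x : Finset α) : x ∆ ∅ = x := by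
  rw [← Finset.bot_eq_empty, symmDiff_bot]

lemma ins (p : α) (x c : Finset α) (hp : p ∉ x) :
    (insert p x ∩ c).card = (x ∩ c).card + if p ∈ c then 1 else 0 := by
  split_ifs with h
  · rw [Finset.insert_inter_of_mem h, Finset.card_insert_of_notMem]
    simp [hp]
  · rw [Finset.insert_inter_of_notMem h]; rfl

lemma sub_of_inter {x c : Finset α} (h : x.card ≤ (x ∩ c).card) : x ⊆ c := by
  have := Finset.eq_of_subset_of_card_le (Finset.inter_subset_left (s₁ := x) (s₂ := c)) h
  exact Finset.inter_eq_left.mp this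

lemma inter_of_sub {x c : Finset α} (h : x ⊆ c) : (x ∩ c).card = x.card := by
  rw [Finset.inter_eq_left.mpr h]

structure Good (D : Finset (Finset α)) (L N : ℕ) : Prop where
  md : ∀ c ∈ D, ∀ c' ∈ D, c ≠ c' → 6 ≤ (c ∆ c').card
  n3 : ∀ x, (∃ c ∈ D, (x ∆ c).card = 3) → (D.filter (fun c => (x ∆ c).card = 3)).card = L + 1
  n4 : ∀ x, (∃ c ∈ D, (x ∆ c).card = 4) → (∀ c ∈ D, 4 ≤ (x ∆ c).card) →
    (D.filter (fun c => (x ∆ c).card = 4)).card = N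
  c16 : ∀ c ∈ D, ∀ c' ∈ D, (c ∆ c').card = 16 → ∀ d ∈ D, ∃ d' ∈ D, (d ∆ d').card = 16
  hL : 1 ≤ L
  hα : Fintype.card α = 16

/-- words of size `k` containing `x` -/
def wd (D : Finset (Finset α)) (k : ℕ) (x : Finset α) : Finset (Finset α) :=
  D.filter (fun c => c.card = k ∧ x ⊆ c)

lemma mem_wd {D : Finset (Finset α)} {k : ℕ} {x c : Finset α} :
    c ∈ wd D k x ↔ c ∈ D ∧ c.card = k ∧ x ⊆ c := by
  simp [wd]

lemma dc (D : Finset (Finset α)) (k : ℕ) (T : Finset α) :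
    ∑ p ∈ Tᶜ, (wd D k (insert p T)).card = (k - T.card) * (wd D k T).card := by
  have h : ∀ p ∈ Tᶜ, (wd D k (insert p T)).card = ∑ c ∈ wd D k T, if p ∈ c then 1 else 0 := by
    intro p hp
    rw [← Finset.card_filter]
    congr 1
    ext c
    simp only [mem_wd, Finset.mem_filter, Finset.insert_subset_iff]
    tauto
  rw [Finset.sum_congr rfl h, Finset.sum_comm]
  rw [Finset.sum_congr rfl (g := fun _ => k - T.card), Finset.sum_const, smul_eq_mul, mul_comm]
  intro c hc
  rw [mem_wd] at hc
  rw [← Finset.card_filter, ← hc.2.1, ← Finset.card_sdiff_of_subset hc.2.2]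
  congr 1
  ext p
  simp [and_comm]

variable {D : Finset (Finset α)} {L N : ℕ}

lemma Good.card6 (G : Good D L N) (h0 : ∅ ∈ D) {c : Finset α} (hc : c ∈ D) (hne : c ≠ ∅) :
    6 ≤ c.card := by
  have := G.md c hc ∅ h0 hne
  rwa [sde] at this

lemma Good.cardle (G : Good D L N) (c : Finset α) : c.card ≤ 16 := by
  rw [← G.hα]; exact Finset.card_le_univ c

lemma Good.cardc (G : Good D L N) (c : Finset α) : cᶜ.card = 16 - c.card := by
  rw [Finset.card_compl, G.hα]

/-- intersection bound -/
lemma Good.int (G : Good D L N) {c c' : Finset α} (hc : c ∈ D) (hc' : c' ∈ D) (hne : c ≠ c') :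
    2 * (c ∩ c').card + 6 ≤ c.card + c'.card := by
  have := G.md c hc c' hc' hne
  have := sd c c'
  omega

lemma Good.blk3 (G : Good D L N) (h0 : ∅ ∈ D) {T : Finset α} (hT : T.card = 3) :
    (wd D 6 T).card = L := by
  have h := G.n3 T ⟨∅, h0, by rwa [sde]⟩
  have e : D.filter (fun c => (T ∆ c).card = 3) = insert ∅ (wd D 6 T) := by
    ext c
    simp only [Finset.mem_filter, Finset.mem_insert, mem_wd]
    constructor
    · rintro ⟨hc, h3⟩
      by_cases hce : c = ∅
      · exact Or.inl hce
      · right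
        have h6 := G.card6 h0 hc hce
        have := sd T c
        have h7 : (T ∩ c).card ≤ T.card := Finset.card_le_card Finset.inter_subset_left
        exact ⟨hc, by omega, sub_of_inter (by omega)⟩
    · rintro (rfl | ⟨hc, h6, hs⟩)
      · exact ⟨h0, by rwa [sde]⟩
      · refine ⟨hc, ?_⟩
        have := sd T c
        have := inter_of_sub hs
        omega
  rw [e, Finset.card_insert_of_notMem] at h
  · omega
  · simp [mem_wd]

lemma Good.wd_le (G : Good D L N) {k : ℕ} {x : Finset α} (hk : 2 * k < 2 * x.card + 6) :
    (wd D k x).card ≤ 1 := by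
  rw [Finset.card_le_one]
  intro a ha b hb
  rw [mem_wd] at ha hb
  by_contra hne
  have := G.int ha.1 hb.1 hne
  have h2 : x.card ≤ (a ∩ b).card :=
    Finset.card_le_card (Finset.subset_inter ha.2.2 hb.2.2)
  omega

/-- number of covered extension points -/
lemma Good.ncov (G : Good D L N) {k : ℕ} {T : Finset α} (hk : 2 * k < 2 * (T.card + 1) + 6) :
    (Tᶜ.filter (fun p => wd D k (insert p T) ≠ ∅)).card = (k - T.card) * (wd D k T).card := by
  rw [← dc, Finset.card_filter]
  apply Finset.sum_congr rfl
  intro p hp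
  have hp' : p ∉ T := by simpa using hp
  have hle : (wd D k (insert p T)).card ≤ 1 := by
    apply G.wd_le
    rw [Finset.card_insert_of_notMem hp']; exact hk
  split_ifs with h
  · have := Finset.card_pos.mpr (Finset.nonempty_iff_ne_empty.mpr h)
    omega
  · simp only [ne_eq, not_not] at h
    rw [h]; rfl

lemma Good.L_le (G : Good D L N) (h0 : ∅ ∈ D) : L ≤ 4 := by
  obtain ⟨T, -, hT⟩ := Finset.exists_subset_card_eq (s := (Finset.univ : Finset α)) (n := 3)
    (by rw [Finset.card_univ, G.hα]; norm_num)
  have h := G.ncov (k := 6) (T := T) (by omega)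
  rw [G.blk3 h0 hT, hT] at h
  have h2 := Finset.card_filter_le Tᶜ (fun p => wd D 6 (insert p T) ≠ ∅)
  have := G.cardc T
  omega

/-- blocks meeting a quad in exactly three points -/
def tri (D : Finset (Finset α)) (x : Finset α) : Finset (Finset α) :=
  D.filter (fun c => c.card = 6 ∧ (x ∩ c).card = 3)

lemma Good.tri_card (G : Good D L N) (h0 : ∅ ∈ D) {x : Finset α} (hx : x.card = 4) :
    (tri D x).card + 4 * (wd D 6 x).card = 4 * L := by
  have h1 : ∑ T ∈ x.powersetCard 3, (wd D 6 T).card = 4 * L := by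
    rw [Finset.sum_congr rfl (g := fun _ => L)]
    · rw [Finset.sum_const, Finset.card_powersetCard, hx]; rfl
    · intro T hT
      exact G.blk3 h0 (Finset.mem_powersetCard.mp hT).2
  rw [← h1]
  have h2 : ∀ T ∈ x.powersetCard 3, (wd D 6 T).card =
      ∑ c ∈ D.filter (fun c => c.card = 6), if T ⊆ c then 1 else 0 := by
    intro T _
    rw [← Finset.card_filter, Finset.filter_filter]; rfl
  rw [Finset.sum_congr rfl h2, Finset.sum_comm]
  have h3 : ∀ c ∈ D.filter (fun c => c.card = 6),
      (∑ T ∈ x.powersetCard 3, if T ⊆ c then 1 else 0) =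
      (if (x ∩ c).card = 3 then 1 else 0) + 4 * (if x ⊆ c then 1 else 0) := by
    intro c _
    rw [← Finset.card_filter]
    have e : (x.powersetCard 3).filter (fun T => T ⊆ c) = (x ∩ c).powersetCard 3 := by
      ext T
      simp only [Finset.mem_filter, Finset.mem_powersetCard, Finset.subset_inter_iff]
      tauto
    rw [e, Finset.card_powersetCard]
    have hle : (x ∩ c).card ≤ 4 := hx ▸ Finset.card_le_card Finset.inter_subset_left
    by_cases hs : x ⊆ c
    · rw [inter_of_sub hs, hx, if_pos hs]; rfl
    · rw [if_neg hs]
      have : (x ∩ c).card ≠ 4 := fun h => hs (sub_of_inter (by omega))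
      interval_cases (x ∩ c).card <;> simp_all [Nat.choose]
  rw [Finset.sum_congr rfl h3, Finset.sum_add_distrib, ← Finset.mul_sum, ← Finset.card_filter,
    ← Finset.card_filter, Finset.filter_filter, Finset.filter_filter]
  rfl

lemma Good.covered (G : Good D L N) (h0 : ∅ ∈ D) {x B : Finset α} (hx : x.card = 4)
    (hB : B ∈ D) (hB6 : B.card = 6) (hxB : x ⊆ B) :
    4 * (wd D 8 x).card + 2 * L = 12 := by
  have hxw : (wd D 6 x).card = 1 := by
    have h1 := G.wd_le (k := 6) (x := x) (by omega)
    have h2 : 0 < (wd D 6 x).card := Finset.card_pos.mpr ⟨B, mem_wd.mpr ⟨hB, hB6, hxB⟩⟩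
    omega
  have htri := G.tri_card h0 hx
  have hBc := G.cardc B
  have key : ∑ p ∈ Bᶜ, (D.filter (fun c => (insert p x ∆ c).card = 3)).card = 10 * (L + 1) := by
    rw [Finset.sum_congr rfl (g := fun _ => L + 1)]
    · rw [Finset.sum_const, hBc, hB6]; rfl
    · intro p hp
      have hpB : p ∉ B := by simpa using hp
      apply G.n3
      refine ⟨B, hB, ?_⟩
      have := sd (insert p x) B
      rw [ins p x B (fun h => hpB (hxB h)), if_neg hpB, inter_of_sub hxB,
        Finset.card_insert_of_notMem (fun h => hpB (hxB h))] at this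
      omega
  have h2 : ∀ p ∈ Bᶜ, (D.filter (fun c => (insert p x ∆ c).card = 3)).card =
      ∑ c ∈ D, if (insert p x ∆ c).card = 3 then 1 else 0 := by
    intro p _
    rw [Finset.card_filter]
  rw [Finset.sum_congr rfl h2, Finset.sum_comm] at key
  have h3 : ∀ c ∈ D, (∑ p ∈ Bᶜ, if (insert p x ∆ c).card = 3 then 1 else 0) =
      (if c = B then 10 else 0) + 3 * (if c.card = 6 ∧ (x ∩ c).card = 3 then 1 else 0)
      + 4 * (if c.card = 8 ∧ x ⊆ c then 1 else 0) := by
    intro c hc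
    rw [← Finset.card_filter]
    have hd : ∀ p ∈ Bᶜ, (insert p x ∆ c).card + 2 * ((x ∩ c).card + if p ∈ c then 1 else 0)
        = 5 + c.card := by
      intro p hp
      have hpB : p ∉ B := by simpa using hp
      have hpx : p ∉ x := fun h => hpB (hxB h)
      have := sd (insert p x) c
      rw [ins p x c hpx, Finset.card_insert_of_notMem hpx] at this
      omega
    have hle : (x ∩ c).card ≤ 4 := hx ▸ Finset.card_le_card Finset.inter_subset_left
    have hsub : (x ∩ c).card = 4 → x ⊆ c := fun h => sub_of_inter (by omega)
    by_cases hcB : c = B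
    · subst hcB
      rw [if_pos rfl, if_neg (by rw [inter_of_sub hxB]; omega), if_neg (by omega),
        Finset.filter_true_of_mem, hBc, hB6]
      intro p hp
      have := hd p hp
      have hpB : p ∉ c := by simpa using hp
      rw [if_neg hpB, inter_of_sub hxB] at this
      omega
    · rw [if_neg hcB]
      have hinter := G.int hc hB hcB
      have hxi : (x ∩ c).card ≤ (c ∩ B).card := by
        apply Finset.card_le_card
        intro a ha
        rw [Finset.mem_inter] at ha ⊢
        exact ⟨ha.2, hxB ha.1⟩
      have hfil : (c.card = 6 ∧ (x ∩ c).card = 3) ∨ (c.card = 8 ∧ x ⊆ c) →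
          Bᶜ.filter (fun p => (insert p x ∆ c).card = 3) = c \ B := by
        intro hor
        ext p
        simp only [Finset.mem_filter, Finset.mem_sdiff]
        constructor
        · rintro ⟨hp, h⟩
          have h' := hd p hp
          refine ⟨?_, by simpa using hp⟩
          by_contra hpc
          rw [if_neg hpc] at h'
          rcases hor with h8 | h8
          · omega
          · have := inter_of_sub h8.2
            omega
        · rintro ⟨hpc, hpB⟩
          have hp : p ∈ Bᶜ := by simpa using hpB
          have h' := hd p hp
          refine ⟨hp, ?_⟩
          rw [if_pos hpc] at h'
          rcases hor with h8 | h8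
          · omega
          · have := inter_of_sub h8.2
            omega
      have hsdc := Finset.card_sdiff_add_card_inter c B
      by_cases hA : c.card = 6 ∧ (x ∩ c).card = 3
      · rw [if_pos hA, if_neg (by omega), hfil (Or.inl hA)]
        omega
      · rw [if_neg hA]
        by_cases hO : c.card = 8 ∧ x ⊆ c
        · rw [if_pos hO, hfil (Or.inr hO)]
          have := inter_of_sub hO.2
          omega
        · rw [if_neg hO, Finset.card_eq_zero.mpr]
          rw [Finset.filter_eq_empty_iff]
          intro p hp h
          have h' := hd p hp
          by_cases hce : c = ∅
          · subst hce
            simp at h'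
            omega
          · have h6 := G.card6 h0 hc hce
            have hx4 : (x ∩ c).card = 4 → ¬ (c.card = 8) := fun h4 h8 => hO ⟨h8, hsub h4⟩
            split_ifs at h' <;> omega
  rw [Finset.sum_congr rfl h3, Finset.sum_add_distrib, Finset.sum_add_distrib, ← Finset.mul_sum,
    ← Finset.mul_sum, ← Finset.card_filter, ← Finset.card_filter, Finset.sum_ite_eq' D B,
    if_pos hB] at key
  change 10 + 3 * (tri D x).card + 4 * (wd D 8 x).card = _ at key
  omega

end local_part
end NR

namespace NR
open scoped symmDiff

section local_part2
variable {α : Type*} [Fintype α] [DecidableEq α]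
variable {D : Finset (Finset α)} {L N : ℕ}

lemma Good.deep (G : Good D L N) (h0 : ∅ ∈ D) (hL2 : 2 ≤ L) {x : Finset α} (hx : x.card = 4)
    (hu : wd D 6 x = ∅) : ∀ c ∈ D, 4 ≤ (x ∆ c).card := by
  intro c hc
  by_contra hlt
  have hsd := sd x c
  have hle : (x ∩ c).card ≤ 4 := hx ▸ Finset.card_le_card Finset.inter_subset_left
  by_cases hce : c = ∅
  · subst hce
    rw [sde] at hlt
    omega
  have h6 := G.card6 h0 hc hce
  have hi : (x ∩ c).card = 4 := by omega
  have hs : x ⊆ c := sub_of_inter (by omega)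
  have hc6 : c.card ≠ 6 := by
    intro h
    have : c ∈ wd D 6 x := mem_wd.mpr ⟨hc, h, hs⟩
    rw [hu] at this
    simp at this
  have hc3 : (x ∆ c).card = 3 := by omega
  have hn := G.n3 x ⟨c, hc, hc3⟩
  have hle7 : L + 1 ≤ (wd D 7 x).card := by
    rw [← hn]
    apply Finset.card_le_card
    intro d hd
    rw [Finset.mem_filter] at hd
    have hsd' := sd x d
    have hle' : (x ∩ d).card ≤ 4 := hx ▸ Finset.card_le_card Finset.inter_subset_left
    have hde : d ≠ ∅ := by
      rintro rfl
      rw [sde] at hd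
      omega
    have h6' := G.card6 h0 hd.1 hde
    exact mem_wd.mpr ⟨hd.1, by omega, sub_of_inter (by omega)⟩
  have hW := G.ncov (k := 7) (T := x) (by omega)
  obtain ⟨t, ht⟩ : x.Nonempty := Finset.card_pos.mp (by omega)
  have hTc : (x.erase t).card = 3 := by rw [Finset.card_erase_of_mem ht, hx]
  have hV := G.ncov (k := 6) (T := x.erase t) (by omega)
  rw [G.blk3 h0 hTc, hTc] at hV
  have hdisj : Disjoint (xᶜ.filter (fun p => wd D 7 (insert p x) ≠ ∅))
      ((x.erase t)ᶜ.filter (fun p => wd D 6 (insert p (x.erase t)) ≠ ∅)) := by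
    rw [Finset.disjoint_left]
    intro p hp hq
    rw [Finset.mem_filter] at hp hq
    obtain ⟨d, hd⟩ := Finset.nonempty_iff_ne_empty.mpr hp.2
    obtain ⟨B, hB⟩ := Finset.nonempty_iff_ne_empty.mpr hq.2
    rw [mem_wd] at hd hB
    have hinter := G.int hd.1 hB.1 (by rintro rfl; omega)
    have hp1 : p ∉ x := by simpa using hp.1
    have : (insert p (x.erase t)).card ≤ (d ∩ B).card := by
      apply Finset.card_le_card
      apply Finset.subset_inter _ hB.2.2
      exact (Finset.insert_subset_insert p (Finset.erase_subset t x)).trans hd.2.2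
    rw [Finset.card_insert_of_notMem (fun h => hp1 (Finset.mem_of_mem_erase h))] at this
    omega
  have hsub : (xᶜ.filter (fun p => wd D 7 (insert p x) ≠ ∅)) ∪
      ((x.erase t)ᶜ.filter (fun p => wd D 6 (insert p (x.erase t)) ≠ ∅)) ⊆ xᶜ := by
    intro p hp
    rw [Finset.mem_union, Finset.mem_filter, Finset.mem_filter] at hp
    rcases hp with hp | hp
    · exact hp.1
    · rw [Finset.mem_compl]
      intro hpx
      have hpt : p = t := by
        have := hp.1
        simp only [Finset.mem_compl, Finset.mem_erase, not_and] at this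
        by_contra hne
        exact this hne hpx
      subst hpt
      rw [Finset.insert_erase ht] at hp
      exact hp.2 hu
  have h1 := Finset.card_le_card hsub
  rw [Finset.card_union_of_disjoint hdisj, hW, hV, G.cardc, hx] at h1
  omega

lemma card_sd_single (y : Finset α) (p : α) :
    (y ∆ {p}).card = if p ∈ y then y.card - 1 else y.card + 1 := by
  have h := sd y {p}
  split_ifs with hp
  · rw [Finset.inter_singleton_of_mem hp] at h
    simp at h
    omega
  · rw [Finset.inter_singleton_of_notMem hp] at h
    simp at h
    omega

lemma Good.uncovered (G : Good D L N) (h0 : ∅ ∈ D) (hL2 : 2 ≤ L) {x : Finset α} (hx : x.card = 4)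
    (hu : wd D 6 x = ∅) : N = 1 + 4 * L + (wd D 8 x).card ∧ ∃ n ≤ 16, 4 * N = (L + 1) * n := by
  have hdeep := G.deep h0 hL2 hx hu
  have hN := G.n4 x ⟨∅, h0, by rwa [sde]⟩ hdeep
  constructor
  · rw [← hN]
    have htri := G.tri_card h0 hx
    rw [hu] at htri
    have e : D.filter (fun c => (x ∆ c).card = 4) = insert ∅ (tri D x ∪ wd D 8 x) := by
      ext c
      simp only [Finset.mem_filter, Finset.mem_insert, Finset.mem_union, mem_wd, tri]
      constructor
      · rintro ⟨hc, h4⟩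
        by_cases hce : c = ∅
        · exact Or.inl hce
        · right
          have h6 := G.card6 h0 hc hce
          have := sd x c
          have h7 : (x ∩ c).card ≤ x.card := Finset.card_le_card Finset.inter_subset_left
          by_cases h3 : (x ∩ c).card = 3
          · left
            exact ⟨hc, by omega, h3⟩
          · right
            exact ⟨hc, by omega, sub_of_inter (by omega)⟩
      · rintro (rfl | ⟨hc, h6, hs⟩ | ⟨hc, h6, hs⟩)
        · exact ⟨h0, by rwa [sde]⟩
        · refine ⟨hc, ?_⟩
          have := sd x c
          omega
        · refine ⟨hc, ?_⟩
          have := sd x c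
          have := inter_of_sub hs
          omega
    rw [e, Finset.card_insert_of_notMem, Finset.card_union_of_disjoint]
    · simp at htri
      omega
    · rw [Finset.disjoint_left]
      intro c h1 h2
      rw [mem_wd] at h2
      simp only [tri, Finset.mem_filter] at h1
      omega
    · simp [mem_wd, tri]
  · have key : ∑ p ∈ (Finset.univ : Finset α),
        (D.filter (fun c => ((x ∆ {p}) ∆ c).card = 3)).card = 4 * N := by
      have h2 : ∀ p ∈ (Finset.univ : Finset α),
          (D.filter (fun c => ((x ∆ {p}) ∆ c).card = 3)).card =
          ∑ c ∈ D, if ((x ∆ {p}) ∆ c).card = 3 then 1 else 0 := by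
        intro p _
        rw [Finset.card_filter]
      rw [Finset.sum_congr rfl h2, Finset.sum_comm, ← hN, Finset.card_filter, Finset.mul_sum]
      apply Finset.sum_congr rfl
      intro c hc
      have hd := hdeep c hc
      rw [← Finset.card_filter]
      have e : ∀ p, ((x ∆ {p}) ∆ c).card = 3 ↔ (p ∈ x ∆ c ∧ (x ∆ c).card = 4) := by
        intro p
        rw [symmDiff_right_comm, card_sd_single]
        split_ifs with h
        · simp only [h, true_and]; omega
        · simp only [h, false_and, iff_false]; omega
      simp only [e]
      split_ifs with h
      · simp [h]
      · simp [h]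
    refine ⟨((Finset.univ : Finset α).filter (fun p => ∃ c ∈ D, ((x ∆ {p}) ∆ c).card = 3)).card,
      G.cardle _, ?_⟩
    rw [← key, Finset.card_filter, Finset.mul_sum]
    apply Finset.sum_congr rfl
    intro p _
    split_ifs with h
    · rw [G.n3 _ h, mul_one]
    · rw [mul_zero, Finset.card_eq_zero, Finset.filter_eq_empty_iff]
      intro c hc h3
      exact h ⟨c, hc, h3⟩

lemma Good.exT (G : Good D L N) : ∃ T : Finset α, T.card = 3 := by
  obtain ⟨T, -, hT⟩ := Finset.exists_subset_card_eq (s := (Finset.univ : Finset α)) (n := 3)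
    (by rw [Finset.card_univ, G.hα]; norm_num)
  exact ⟨T, hT⟩

lemma Good.L_even (G : Good D L N) (h0 : ∅ ∈ D) : L = 2 ∨ L = 4 := by
  have h1 := G.hL
  have h2 := G.L_le h0
  obtain ⟨T, hT⟩ := G.exT
  have h3 := G.blk3 h0 hT
  obtain ⟨B, hB⟩ : (wd D 6 T).Nonempty := Finset.card_pos.mp (by omega)
  rw [mem_wd] at hB
  obtain ⟨x, hx, hx4⟩ := Finset.exists_subset_card_eq (s := B) (n := 4) (by omega)
  have := G.covered h0 hx4 hB.1 hB.2.1 hx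
  omega

lemma Good.sum8 (G : Good D L N) (h0 : ∅ ∈ D) {T : Finset α} (hT : T.card = 3) :
    5 * (wd D 8 T).card = 3 * L * ((12 - 2 * L) / 4) + (13 - 3 * L) * (N - 1 - 4 * L) := by
  have hL2 := G.L_even h0
  have hd := dc D 8 T
  have hV := G.ncov (k := 6) (T := T) (by omega)
  rw [G.blk3 h0 hT, hT] at hV
  have hV' := Finset.card_filter_add_card_filter_not (s := Tᶜ)
    (fun p => wd D 6 (insert p T) ≠ ∅)
  rw [G.cardc, hT, hV] at hV'
  rw [hT, ← Finset.sum_filter_add_sum_filter_not Tᶜ (fun p => wd D 6 (insert p T) ≠ ∅)] at hd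
  rw [Finset.sum_congr rfl (g := fun _ => (12 - 2 * L) / 4), Finset.sum_const, hV] at hd
  · rw [Finset.sum_congr rfl (g := fun _ => N - 1 - 4 * L), Finset.sum_const] at hd
    · have e : ((Tᶜ.filter (fun p => ¬ (wd D 6 (insert p T) ≠ ∅))).card) = 13 - 3 * L := by
        omega
      rw [e] at hd
      simp only [smul_eq_mul] at hd
      rw [← hd]
    · intro p hp
      simp only [Finset.mem_filter, Finset.mem_compl, ne_eq, not_not] at hp
      have := (G.uncovered h0 (by omega) (x := insert p T)
        (by rw [Finset.card_insert_of_notMem hp.1]; omega) hp.2).1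
      omega
  · intro p hp
    simp only [Finset.mem_filter, Finset.mem_compl] at hp
    obtain ⟨B, hB⟩ := Finset.nonempty_iff_ne_empty.mpr hp.2
    rw [mem_wd] at hB
    have := G.covered h0 (x := insert p T)
        (by rw [Finset.card_insert_of_notMem hp.1]; omega) hB.1 hB.2.1 hB.2.2
    omega

lemma Good.exU (G : Good D L N) (h0 : ∅ ∈ D) {T : Finset α} (hT : T.card = 3) :
    ∃ p, p ∉ T ∧ wd D 6 (insert p T) = ∅ := by
  by_contra hcon
  push Not at hcon
  have hL2 := G.L_le h0
  have hV := G.ncov (k := 6) (T := T) (by omega)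
  rw [G.blk3 h0 hT, hT, Finset.filter_true_of_mem, G.cardc, hT] at hV
  · omega
  · intro p hp
    exact Finset.nonempty_iff_ne_empty.mp (hcon p (by simpa using hp))

lemma Good.L4 (G : Good D L N) (h0 : ∅ ∈ D) : L = 4 := by
  rcases G.L_even h0 with rfl | h
  · exfalso
    obtain ⟨T, hT⟩ := G.exT
    obtain ⟨p, hp, hu⟩ := G.exU h0 hT
    have h8 := G.sum8 h0 hT
    obtain ⟨h1, n, hn, h2⟩ := G.uncovered h0 (by omega) (x := insert p T)
        (by rw [Finset.card_insert_of_notMem hp]; omega) hu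
    omega
  · exact h

lemma Good.N20 (G : Good D 4 N) (h0 : ∅ ∈ D) : N = 20 := by
  obtain ⟨T, hT⟩ := G.exT
  obtain ⟨p, hp, hu⟩ := G.exU h0 hT
  obtain ⟨h1, n, hn, h2⟩ := G.uncovered h0 (by omega) (x := insert p T)
      (by rw [Finset.card_insert_of_notMem hp]; omega) hu
  omega

lemma Good.oct3 (G : Good D 4 N) (h0 : ∅ ∈ D) {T : Finset α} (hT : T.card = 3) :
    (wd D 8 T).card = 3 := by
  have := G.sum8 h0 hT
  have := G.N20 h0
  omega

lemma Good.oct4 (G : Good D 4 N) (h0 : ∅ ∈ D) {x : Finset α} (hx : x.card = 4)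
    (hc : wd D 6 x ≠ ∅) : (wd D 8 x).card = 1 := by
  obtain ⟨B, hB⟩ := Finset.nonempty_iff_ne_empty.mpr hc
  rw [mem_wd] at hB
  have := G.covered h0 hx hB.1 hB.2.1 hB.2.2
  omega

/-- the uncovered extension point is unique -/
lemma Good.uniqU (G : Good D 4 N) (h0 : ∅ ∈ D) {T : Finset α} (hT : T.card = 3) {p q : α}
    (hp : p ∉ T) (hq : q ∉ T)
    (hpu : wd D 6 (insert p T) = ∅) (hqu : wd D 6 (insert q T) = ∅) : p = q := by
  have hV := G.ncov (k := 6) (T := T) (by omega)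
  rw [G.blk3 h0 hT, hT] at hV
  have hV' := Finset.card_filter_add_card_filter_not (s := Tᶜ)
    (fun p => wd D 6 (insert p T) ≠ ∅)
  rw [G.cardc, hT, hV] at hV'
  have h1 : (Tᶜ.filter (fun p => ¬ (wd D 6 (insert p T) ≠ ∅))).card ≤ 1 := by omega
  rw [Finset.card_le_one] at h1
  apply h1 <;> simp [*]

/-- an octad containing a triple contains its uncovered extension -/
lemma Good.octU (G : Good D 4 N) (h0 : ∅ ∈ D) {T O : Finset α} (hT : T.card = 3) {p : α}
    (hp : p ∉ T) (hpu : wd D 6 (insert p T) = ∅) (hO : O ∈ D) (hO8 : O.card = 8)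
    (hTO : T ⊆ O) : p ∈ O := by
  by_contra hpO
  have hcov : ∀ q ∈ O \ T, ∃ B ∈ wd D 6 T, q ∈ B := by
    intro q hq
    rw [Finset.mem_sdiff] at hq
    by_contra hcon
    apply hpO
    have : wd D 6 (insert q T) = ∅ := by
      rw [Finset.eq_empty_iff_forall_notMem]
      intro B hB
      rw [mem_wd, Finset.insert_subset_iff] at hB
      exact hcon ⟨B, mem_wd.mpr ⟨hB.1, hB.2.1, hB.2.2.2⟩, hB.2.2.1⟩
    rw [G.uniqU h0 hT hp hq.2 hpu this]
    exact hq.1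
  choose! f hf using hcov
  have hcard : (wd D 6 T).card < (O \ T).card := by
    rw [G.blk3 h0 hT, Finset.card_sdiff_of_subset hTO]; omega
  obtain ⟨q, hq, q', hq', hne, heq⟩ := Finset.exists_ne_map_eq_of_card_lt_of_maps_to hcard
    (fun q hq => (hf q hq).1)
  have h1 := hf q hq
  have h2 := hf q' hq'
  rw [← heq] at h2
  rw [mem_wd] at h1
  rw [Finset.mem_sdiff] at hq hq'
  have hinter := G.int hO h1.1.1 (by rintro h; rw [h] at hO8; omega)
  have : (insert q (insert q' T)).card ≤ (O ∩ f q).card := by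
    apply Finset.card_le_card
    simp only [Finset.insert_subset_iff, Finset.mem_inter]
    exact ⟨⟨hq.1, h1.2⟩, ⟨hq'.1, h2.2⟩, Finset.subset_inter hTO h1.1.2.2⟩
  rw [Finset.card_insert_of_notMem (by simp [hne, hq.2]), Finset.card_insert_of_notMem hq'.2] at this
  omega

end local_part2
end NR

set_option linter.unusedSectionVars false

namespace NR
open scoped symmDiff

section local_part3
variable {α : Type*} [Fintype α] [DecidableEq α]
variable {D : Finset (Finset α)} {N : ℕ}

lemma card3 {a b c : α} (hab : a ≠ b) (hac : a ≠ c) (hbc : b ≠ c) :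
    ({a, b, c} : Finset α).card = 3 := Finset.card_eq_three.mpr ⟨a, b, c, hab, hac, hbc, rfl⟩

/-- uncovered quad -/
def U (D : Finset (Finset α)) (a b c d : α) : Prop := wd D 6 {a, b, c, d} = ∅

lemma U.perm {a b c d a' b' c' d' : α} (h : U D a b c d)
    (e : ({a, b, c, d} : Finset α) = {a', b', c', d'}) : U D a' b' c' d' := by
  unfold U at *
  rwa [← e]

lemma U.s1 {a b c d : α} (h : U D a b c d) : U D b a c d :=
  h.perm (Finset.insert_comm _ _ _)
lemma U.s2 {a b c d : α} (h : U D a b c d) : U D a c b d :=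
  h.perm (congrArg _ (Finset.insert_comm _ _ _))
lemma U.s3 {a b c d : α} (h : U D a b c d) : U D a b d c :=
  h.perm (congrArg _ (congrArg _ (Finset.pair_comm _ _)))

lemma Good.ext (G : Good D 4 N) (h0 : ∅ ∈ D) {a b c : α} (hab : a ≠ b) (hac : a ≠ c)
    (hbc : b ≠ c) : ∃ d, d ≠ a ∧ d ≠ b ∧ d ≠ c ∧ U D d a b c := by
  obtain ⟨p, hp, hu⟩ := G.exU h0 (card3 hab hac hbc)
  simp only [Finset.mem_insert, Finset.mem_singleton, not_or] at hp
  exact ⟨p, hp.1, hp.2.1, hp.2.2, hu⟩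

lemma Good.extu (G : Good D 4 N) (h0 : ∅ ∈ D) {a b c d d' : α} (hab : a ≠ b) (hac : a ≠ c)
    (hbc : b ≠ c) (h1 : d ≠ a ∧ d ≠ b ∧ d ≠ c) (h2 : d' ≠ a ∧ d' ≠ b ∧ d' ≠ c)
    (hU : U D d a b c) (hU' : U D d' a b c) : d = d' := by
  apply G.uniqU h0 (card3 hab hac hbc) _ _ hU hU'
  · simp only [Finset.mem_insert, Finset.mem_singleton, not_or]; exact h1
  · simp only [Finset.mem_insert, Finset.mem_singleton, not_or]; exact h2

lemma Good.clo (G : Good D 4 N) (h0 : ∅ ∈ D) {O : Finset α} (hO : O ∈ D) (hO8 : O.card = 8)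
    {a b c d : α} (hab : a ≠ b) (hac : a ≠ c)
    (hbc : b ≠ c) (h1 : d ≠ a ∧ d ≠ b ∧ d ≠ c) (hU : U D d a b c)
    (ha : a ∈ O) (hb : b ∈ O) (hc : c ∈ O) : d ∈ O := by
  apply G.octU h0 (card3 hab hac hbc) _ hU hO hO8
  · simp [Finset.insert_subset_iff, *]
  · simp only [Finset.mem_insert, Finset.mem_singleton, not_or]; exact h1

lemma Good.no1 (G : Good D 4 N) (h0 : ∅ ∈ D) {O : Finset α} (hO : O ∈ D) (hO8 : O.card = 8)
    {a b c d : α} (hab : a ≠ b) (hac : a ≠ c)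
    (hbc : b ≠ c) (h1 : d ≠ a ∧ d ≠ b ∧ d ≠ c) (hU : U D d a b c)
    (ha : a ∈ O) (hb : b ∉ O) (hc : c ∉ O) : d ∈ O := by
  by_contra hd
  have hex : ∀ z ∈ O.erase a, ∃ u, u ≠ a ∧ u ≠ z ∧ u ≠ b ∧ U D u a z b := by
    intro z hz
    rw [Finset.mem_erase] at hz
    exact G.ext h0 hz.1.symm hab (by rintro rfl; exact hb hz.2)
  choose! u hu using hex
  have hmaps : ∀ z ∈ O.erase a, u z ∈ Oᶜ.erase b := by
    intro z hz
    obtain ⟨h1', h2, h3, h4⟩ := hu z hz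
    rw [Finset.mem_erase] at hz
    rw [Finset.mem_erase, Finset.mem_compl]
    refine ⟨h3, fun hin => hb ?_⟩
    apply G.clo h0 hO hO8 (a := a) (b := z) (c := u z) hz.1.symm h1'.symm h2.symm
      ⟨hab.symm, by rintro rfl; exact hb hz.2, h3.symm⟩ _ ha hz.2 hin
    exact h4.s1.s2.s3.s2.s1
  have hinj : Set.InjOn u (O.erase a : Finset α) := by
    intro z hz z' hz' heq
    rw [Finset.mem_coe] at hz hz'
    obtain ⟨h1, h2, h3, h4⟩ := hu z hz
    obtain ⟨h1', h2', h3', h4'⟩ := hu z' hz'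
    rw [Finset.mem_erase] at hz hz'
    rw [← heq] at h1' h2' h3' h4'
    apply G.extu h0 (a := a) (b := b) (c := u z) hab h1.symm h3.symm
      ⟨hz.1, by rintro rfl; exact hb hz.2, h2.symm⟩ ⟨hz'.1, by rintro rfl; exact hb hz'.2, h2'.symm⟩
    · exact h4.s2.s1.s2.s3
    · exact h4'.s2.s1.s2.s3
  have hcards : (Oᶜ.erase b).card ≤ (O.erase a).card := by
    rw [Finset.card_erase_of_mem ha, Finset.card_erase_of_mem (by simpa using hb), G.cardc, hO8]
  obtain ⟨z, hz, hzc⟩ := Finset.surj_on_of_inj_on_of_card_le (fun z _ => u z) hmaps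
    (fun z z' hz hz' h => hinj hz hz' h) hcards c (by
      rw [Finset.mem_erase, Finset.mem_compl]; exact ⟨hbc.symm, hc⟩)
  obtain ⟨h1', h2, h3, h4⟩ := hu z hz
  rw [Finset.mem_erase] at hz
  apply hd
  have : d = z := by
    apply G.extu h0 hab hac hbc h1 ⟨hz.1, by rintro rfl; exact hb hz.2,
      by rintro rfl; exact hc hz.2⟩ hU
    rw [hzc]
    exact h4.s2.s1.s2.s3
  rw [this]; exact hz.2

/-- characteristic vector of a point on octads -/
def hv (D : Finset (Finset α)) (i : α) : Finset α → ZMod 2 :=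
  fun O => if O ∈ D ∧ O.card = 8 ∧ i ∈ O then 1 else 0

lemma par {a b c d : Prop} [Decidable a] [Decidable b] [Decidable c] [Decidable d]
    (q1 : a → b → c → d) (q2 : a → ¬ b → ¬ c → d) (q3 : b → ¬ a → ¬ c → d)
    (q4 : c → ¬ a → ¬ b → d) (r1 : a → b → d → c) (r2 : a → c → d → b) (r3 : b → c → d → a)
    (r4 : d → ¬ a → ¬ b → c) :
    (if d then 1 else 0 : ZMod 2) =
      (if a then 1 else 0) + (if b then 1 else 0) + (if c then 1 else 0) := by
  by_cases ha : a <;> by_cases hb : b <;> by_cases hc : c <;> by_cases hd : d <;>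
    simp_all <;> decide

lemma Good.hU (G : Good D 4 N) (h0 : ∅ ∈ D)
    {a b c d : α} (hab : a ≠ b) (hac : a ≠ c)
    (hbc : b ≠ c) (h1 : d ≠ a ∧ d ≠ b ∧ d ≠ c) (hU : U D d a b c) :
    hv D d = hv D a + hv D b + hv D c := by
  funext O
  simp only [hv, Pi.add_apply]
  by_cases hO : O ∈ D ∧ O.card = 8
  · obtain ⟨hO, hO8⟩ := hO
    simp only [hO, hO8, true_and]
    have hUb : U D d b a c := hU.s2
    have hUc : U D d c a b := hU.s3.s2
    have q1 := G.clo h0 hO hO8 hab hac hbc h1 hU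
    have q2 := G.no1 h0 hO hO8 hab hac hbc h1 hU
    have q3 := G.no1 h0 hO hO8 hab.symm hbc hac ⟨h1.2.1, h1.1, h1.2.2⟩ hUb
    have q4 := G.no1 h0 hO hO8 hac.symm hbc.symm hab ⟨h1.2.2, h1.1, h1.2.1⟩ hUc
    have r1 := G.clo h0 hO hO8 (a := a) (b := b) (c := d) (d := c) hab h1.1.symm h1.2.1.symm
      ⟨hac.symm, hbc.symm, h1.2.2.symm⟩ hU.s1.s2.s3.s2.s1
    have r2 := G.clo h0 hO hO8 (a := a) (b := c) (c := d) (d := b) hac h1.1.symm h1.2.2.symm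
      ⟨hab.symm, hbc, h1.2.1.symm⟩ hU.s2.s1.s2.s3
    have r3 := G.clo h0 hO hO8 (a := b) (b := c) (c := d) (d := a) hbc h1.2.1.symm h1.2.2.symm
      ⟨hab, hac, h1.1.symm⟩ hU.s1.s2.s3
    have r4 := G.no1 h0 hO hO8 (a := d) (b := a) (c := b) (d := c) h1.1 h1.2.1 hab
      ⟨h1.2.2.symm, hac.symm, hbc.symm⟩ hU.s3.s2.s1
    exact par q1 q2 q3 q4 r1 r2 r3 r4
  · have : ∀ i, ¬ (O ∈ D ∧ O.card = 8 ∧ i ∈ O) := fun i h => hO ⟨h.1, h.2.1⟩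
    simp [this]

lemma Good.pick (G : Good D 4 N) (s : Finset α) (hs : s.card < 16) : ∃ v, v ∉ s := by
  by_contra h
  push Not at h
  have : s = Finset.univ := by ext; simp [h]
  rw [this, Finset.card_univ, G.hα] at hs
  omega

lemma Good.hinj (G : Good D 4 N) (h0 : ∅ ∈ D) : Function.Injective (hv D) := by
  intro x y hxy
  by_contra hne
  obtain ⟨u, hu⟩ := G.pick {x, y} (Finset.card_le_two.trans_lt (by norm_num))
  simp only [Finset.mem_insert, Finset.mem_singleton, not_or] at hu
  obtain ⟨p, hp1, hp2, hp3, hp⟩ := G.ext h0 (a := x) (b := y) (c := u) hne (Ne.symm hu.1) (Ne.symm hu.2)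
  obtain ⟨v, hv'⟩ := G.pick {x, y, u, p} (Finset.card_le_four.trans_lt (by norm_num))
  simp only [Finset.mem_insert, Finset.mem_singleton, not_or] at hv'
  have hcov : wd D 6 (insert y {x, u, v}) ≠ ∅ := by
    intro he
    apply hv'.2.2.2
    apply G.extu h0 (a := x) (b := y) (c := u) hne (Ne.symm hu.1) (Ne.symm hu.2)
      ⟨hv'.1, hv'.2.1, hv'.2.2.1⟩ ⟨hp1, hp2, hp3⟩ _ hp
    exact U.s2 (U.s1 (U.s2 (U.s3 he)))
  have hc3 := card3 (a := x) (b := u) (c := v) (Ne.symm hu.1) (Ne.symm hv'.1) (Ne.symm hv'.2.2.1)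
  have h3 := G.oct3 h0 hc3
  have h1 := G.oct4 h0 (x := insert y {x, u, v}) (by
    rw [Finset.card_insert_of_notMem, hc3]
    simp only [Finset.mem_insert, Finset.mem_singleton, not_or]
    exact ⟨Ne.symm hne, Ne.symm hu.2, Ne.symm hv'.2.1⟩) hcov
  have : ∃ O ∈ wd D 8 {x, u, v}, O ∉ wd D 8 (insert y {x, u, v}) := by
    by_contra hcon
    push Not at hcon
    have := Finset.card_le_card (show wd D 8 {x, u, v} ⊆ wd D 8 (insert y {x, u, v}) from hcon)
    omega
  obtain ⟨O, hO, hO'⟩ := this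
  rw [mem_wd] at hO hO'
  have hxO : x ∈ O := hO.2.2 (by simp)
  have hyO : y ∉ O := fun h => hO' ⟨hO.1, hO.2.1, Finset.insert_subset h hO.2.2⟩
  have := congrFun hxy O
  simp [hv, hO.1, hO.2.1, hxO, hyO] at this

lemma cancel3 (r s : Finset α → ZMod 2) : r + r + s = s := by
  funext O
  simp only [Pi.add_apply]
  generalize r O = x
  generalize s O = y
  revert x y
  decide

/-- range of hv is closed under triple sums -/
lemma Good.hcl (G : Good D 4 N) (h0 : ∅ ∈ D) (a b c : α) :
    ∃ d, hv D d = hv D a + hv D b + hv D c := by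
  by_cases hab : a = b
  · subst hab; exact ⟨c, (cancel3 _ _).symm⟩
  by_cases hac : a = c
  · subst hac; exact ⟨b, by rw [add_right_comm, cancel3]⟩
  by_cases hbc : b = c
  · subst hbc; exact ⟨a, by rw [add_assoc, add_comm, cancel3]⟩
  obtain ⟨d, h1, h2, h3, h4⟩ := G.ext h0 hab hac hbc
  exact ⟨d, G.hU h0 hab hac hbc ⟨h1, h2, h3⟩ h4⟩

/-- the uncovered quads are the zero sums -/
lemma Good.Uiff (G : Good D 4 N) (h0 : ∅ ∈ D)
    {a b c d : α} (hab : a ≠ b) (hac : a ≠ c)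
    (hbc : b ≠ c) (h1 : d ≠ a ∧ d ≠ b ∧ d ≠ c) :
    U D d a b c ↔ hv D d = hv D a + hv D b + hv D c := by
  refine ⟨G.hU h0 hab hac hbc h1, fun h => ?_⟩
  obtain ⟨p, p1, p2, p3, p4⟩ := G.ext h0 hab hac hbc
  have := G.hU h0 hab hac hbc ⟨p1, p2, p3⟩ p4
  have e : d = p := G.hinj h0 (by rw [h, this])
  rw [e]; exact p4

/-- bit coefficients -/
def bt (t : ℕ) (k : Fin 16) : ZMod 2 := if k.val.testBit t then 1 else 0

lemma bt_xor (t : Fin 4) (i j : Fin 16) : bt t (i ^^^ j) = bt t i + bt t j := by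
  revert t i j
  decide +kernel

def Fr (a b c d e : Finset α → ZMod 2) (k : Fin 16) : Finset α → ZMod 2 := fun O =>
  a O + bt 0 k * (b O + a O) + bt 1 k * (c O + a O) + bt 2 k * (d O + a O) + bt 3 k * (e O + a O)

lemma Fr_xor (a b c d e : Finset α → ZMod 2) (i j : Fin 16) :
    Fr a b c d e (i ^^^ j) = Fr a b c d e i + Fr a b c d e j + a := by
  funext O
  simp only [Fr, Pi.add_apply]
  have h0 := bt_xor 0 i j
  have h1 := bt_xor 1 i j
  have h2 := bt_xor 2 i j
  have h3 := bt_xor 3 i j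
  simp only [Fin.val_zero, Fin.val_one, Fin.val_two, show ((3 : Fin 4) : ℕ) = 3 from rfl]
    at h0 h1 h2 h3
  rw [h0, h1, h2, h3]
  have : a O + a O = 0 := CharTwo.add_self_eq_zero _
  linear_combination (-1 : ZMod 2) * this

structure Lab (D : Finset (Finset α)) (σ : Fin 16 ≃ α) : Prop where
  lin : ∀ i j, hv D (σ (i ^^^ j)) = hv D (σ i) + hv D (σ j) + hv D (σ 0)
  b0 : ({σ 0, σ 1, σ 2, σ 4, σ 8, σ 15} : Finset α) ∈ D

lemma Fr_vals (a b c d e : Finset α → ZMod 2) :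
    Fr a b c d e 0 = a ∧ Fr a b c d e 1 = b ∧ Fr a b c d e 2 = c ∧ Fr a b c d e 4 = d ∧
    Fr a b c d e 8 = e ∧ Fr a b c d e 3 = a + b + c ∧ Fr a b c d e 5 = a + b + d ∧
    Fr a b c d e 9 = a + b + e ∧ Fr a b c d e 6 = a + c + d ∧ Fr a b c d e 10 = a + c + e ∧
    Fr a b c d e 12 = a + d + e ∧ Fr a b c d e 7 = b + c + d ∧ Fr a b c d e 11 = b + c + e ∧
    Fr a b c d e 13 = b + d + e ∧ Fr a b c d e 14 = c + d + e ∧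
    Fr a b c d e 15 = a + b + c + d + e := by
  refine ⟨?_, ?_, ?_, ?_, ?_, ?_, ?_, ?_, ?_, ?_, ?_, ?_, ?_, ?_, ?_, ?_⟩ <;>
  · funext O
    simp only [Fr, Pi.add_apply]
    generalize a O = a
    generalize b O = b
    generalize c O = c
    generalize d O = d
    generalize e O = e
    revert a b c d e
    decide

end local_part3
end NR

set_option linter.unusedSectionVars false

namespace NR
open scoped symmDiff

section local_part4
variable {α : Type*} [Fintype α] [DecidableEq α]
variable {D : Finset (Finset α)} {N : ℕ}

lemma Good.noq (G : Good D 4 N) (h0 : ∅ ∈ D) {B : Finset α} (hB : B ∈ D) (hB6 : B.card = 6)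
    {w x y z : α} (hw : w ∈ B) (hx : x ∈ B) (hy : y ∈ B) (hz : z ∈ B)
    (h1 : w ≠ x) (h2 : w ≠ y) (h3 : w ≠ z) (h4 : x ≠ y) (h5 : x ≠ z) (h6 : y ≠ z) :
    hv D w ≠ hv D x + hv D y + hv D z := by
  intro h
  have hU := (G.Uiff h0 h4 h5 h6 ⟨h1, h2, h3⟩).mpr h
  have : B ∈ wd D 6 {w, x, y, z} := mem_wd.mpr ⟨hB, hB6, by simp [Finset.insert_subset_iff, *]⟩
  rw [U] at hU
  rw [hU] at this
  simp at this

lemma ch1 {a b c : Finset α → ZMod 2} (h : a + b + c = a) : b = c := by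
  funext O
  have := congrFun h O
  simp only [Pi.add_apply] at this
  generalize a O = a at *
  generalize b O = b at *
  generalize c O = c at *
  revert a b c
  decide

lemma ch2 {a b c d e : Finset α → ZMod 2} (h : a + b + c + d + e = a) : b = c + d + e := by
  funext O
  have := congrFun h O
  simp only [Pi.add_apply] at this ⊢
  generalize a O = a at *
  generalize b O = b at *
  generalize c O = c at *
  generalize d O = d at *
  generalize e O = e at *
  revert a b c d e
  decide

lemma fin16 : ∀ k : Fin 16, k = 0 ∨ k = 1 ∨ k = 2 ∨ k = 3 ∨ k = 4 ∨ k = 5 ∨ k = 6 ∨ k = 7 ∨ k = 8 ∨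
    k = 9 ∨ k = 10 ∨ k = 11 ∨ k = 12 ∨ k = 13 ∨ k = 14 ∨ k = 15 := by decide

lemma xor_zero_iff : ∀ i j : Fin 16, i ^^^ j = 0 → i = j := by decide

lemma Good.frame (G : Good D 4 N) (h0 : ∅ ∈ D) {B : Finset α} (hB : B ∈ D) (hB6 : B.card = 6)
    {a b c d e f : α} (ha : a ∈ B) (hb : b ∈ B) (hc : c ∈ B) (hd : d ∈ B) (he : e ∈ B)
    (hf : f ∈ B) (hab : a ≠ b) (hac : a ≠ c) (had : a ≠ d) (hae : a ≠ e) (haf : a ≠ f)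
    (hbc : b ≠ c) (hbd : b ≠ d) (hbe : b ≠ e) (hbf : b ≠ f) (hcd : c ≠ d) (hce : c ≠ e)
    (hcf : c ≠ f) (hde : d ≠ e) (hdf : d ≠ f) (hef : e ≠ f) :
    ∃ σ : Fin 16 ≃ α, σ 0 = a ∧ σ 1 = b ∧ σ 2 = c ∧ σ 4 = d ∧ σ 8 = e ∧ σ 15 = f ∧
      (∀ i j, hv D (σ (i ^^^ j)) = hv D (σ i) + hv D (σ j) + hv D (σ 0)) ∧
      hv D f = hv D a + hv D b + hv D c + hv D d + hv D e := by
  have hinj := G.hinj h0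
  obtain ⟨v0, v1, v2, v4, v8, v3, v5, v9, v6, v10, v12, v7, v11, v13, v14, v15⟩ :=
    Fr_vals (hv D a) (hv D b) (hv D c) (hv D d) (hv D e)
  have hr : ∀ k, ∃ p, hv D p = Fr (hv D a) (hv D b) (hv D c) (hv D d) (hv D e) k := by
    intro k
    rcases fin16 k with rfl | rfl | rfl | rfl | rfl | rfl | rfl | rfl | rfl | rfl | rfl | rfl |
      rfl | rfl | rfl | rfl
    · exact ⟨a, v0.symm⟩
    · exact ⟨b, v1.symm⟩
    · exact ⟨c, v2.symm⟩
    · rw [v3]; exact G.hcl h0 _ _ _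
    · exact ⟨d, v4.symm⟩
    · rw [v5]; exact G.hcl h0 _ _ _
    · rw [v6]; exact G.hcl h0 _ _ _
    · rw [v7]; exact G.hcl h0 _ _ _
    · exact ⟨e, v8.symm⟩
    · rw [v9]; exact G.hcl h0 _ _ _
    · rw [v10]; exact G.hcl h0 _ _ _
    · rw [v11]; exact G.hcl h0 _ _ _
    · rw [v12]; exact G.hcl h0 _ _ _
    · rw [v13]; exact G.hcl h0 _ _ _
    · rw [v14]; exact G.hcl h0 _ _ _
    · rw [v15]
      obtain ⟨p, hp⟩ := G.hcl h0 a b c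
      rw [← hp]; exact G.hcl h0 _ _ _
  choose s hs using hr
  have hz : ∀ k, Fr (hv D a) (hv D b) (hv D c) (hv D d) (hv D e) k = hv D a → k = 0 := by
    intro k hk
    rcases fin16 k with rfl | rfl | rfl | rfl | rfl | rfl | rfl | rfl | rfl | rfl | rfl | rfl |
      rfl | rfl | rfl | rfl
    · rfl
    · rw [v1] at hk; exact absurd (hinj hk) hab.symm
    · rw [v2] at hk; exact absurd (hinj hk) hac.symm
    · rw [v3] at hk; exact absurd (hinj (ch1 hk)) hbc
    · rw [v4] at hk; exact absurd (hinj hk) had.symm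
    · rw [v5] at hk; exact absurd (hinj (ch1 hk)) hbd
    · rw [v6] at hk; exact absurd (hinj (ch1 hk)) hcd
    · rw [v7] at hk; exact absurd hk.symm (by apply G.noq h0 hB hB6 <;> assumption)
    · rw [v8] at hk; exact absurd (hinj hk) hae.symm
    · rw [v9] at hk; exact absurd (hinj (ch1 hk)) hbe
    · rw [v10] at hk; exact absurd (hinj (ch1 hk)) hce
    · rw [v11] at hk; exact absurd hk.symm (by apply G.noq h0 hB hB6 <;> assumption)
    · rw [v12] at hk; exact absurd (hinj (ch1 hk)) hde
    · rw [v13] at hk; exact absurd hk.symm (by apply G.noq h0 hB hB6 <;> assumption)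
    · rw [v14] at hk; exact absurd hk.symm (by apply G.noq h0 hB hB6 <;> assumption)
    · rw [v15] at hk; exact absurd (ch2 hk) (by apply G.noq h0 hB hB6 <;> assumption)
  have hsinj : Function.Injective s := by
    intro i j hij
    apply xor_zero_iff
    apply hz
    rw [Fr_xor, ← hs i, ← hs j, hij, cancel3]
  have hbij : Function.Bijective s := by
    rw [Fintype.bijective_iff_injective_and_card]
    exact ⟨hsinj, by rw [G.hα]; rfl⟩
  have t0 : s 0 = a := hinj (by rw [hs, v0])
  have t1 : s 1 = b := hinj (by rw [hs, v1])
  have t2 : s 2 = c := hinj (by rw [hs, v2])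
  have t4 : s 4 = d := hinj (by rw [hs, v4])
  have t8 : s 8 = e := hinj (by rw [hs, v8])
  have t15 : s 15 = f := by
    obtain ⟨k, hk⟩ := hbij.2 f
    have hk' := hs k
    rw [hk] at hk'
    have q : ∀ {x y z : α}, x ∈ B → y ∈ B → z ∈ B → x ≠ y → x ≠ z → y ≠ z → x ≠ f → y ≠ f →
        z ≠ f → hv D f = hv D x + hv D y + hv D z → False := by
      intro x y z hx hy hz h1 h2 h3 h4 h5 h6 h7
      exact G.noq h0 hB hB6 hf hx hy hz h4.symm h5.symm h6.symm h1 h2 h3 h7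
    rcases fin16 k with rfl | rfl | rfl | rfl | rfl | rfl | rfl | rfl | rfl | rfl | rfl | rfl |
      rfl | rfl | rfl | rfl
    · exact absurd (t0.symm.trans hk) haf
    · exact absurd (t1.symm.trans hk) hbf
    · exact absurd (t2.symm.trans hk) hcf
    · rw [v3] at hk'; exact (q ‹_› ‹_› ‹_› ‹_› ‹_› ‹_› ‹_› ‹_› ‹_› hk').elim
    · exact absurd (t4.symm.trans hk) hdf
    · rw [v5] at hk'; exact (q ‹_› ‹_› ‹_› ‹_› ‹_› ‹_› ‹_› ‹_› ‹_› hk').elim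
    · rw [v6] at hk'; exact (q ‹_› ‹_› ‹_› ‹_› ‹_› ‹_› ‹_› ‹_› ‹_› hk').elim
    · rw [v7] at hk'; exact (q ‹_› ‹_› ‹_› ‹_› ‹_› ‹_› ‹_› ‹_› ‹_› hk').elim
    · exact absurd (t8.symm.trans hk) hef
    · rw [v9] at hk'; exact (q ‹_› ‹_› ‹_› ‹_› ‹_› ‹_› ‹_› ‹_› ‹_› hk').elim
    · rw [v10] at hk'; exact (q ‹_› ‹_› ‹_› ‹_› ‹_› ‹_› ‹_› ‹_› ‹_› hk').elim
    · rw [v11] at hk'; exact (q ‹_› ‹_› ‹_› ‹_› ‹_› ‹_› ‹_› ‹_› ‹_› hk').elim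
    · rw [v12] at hk'; exact (q ‹_› ‹_› ‹_› ‹_› ‹_› ‹_› ‹_› ‹_› ‹_› hk').elim
    · rw [v13] at hk'; exact (q ‹_› ‹_› ‹_› ‹_› ‹_› ‹_› ‹_› ‹_› ‹_› hk').elim
    · rw [v14] at hk'; exact (q ‹_› ‹_› ‹_› ‹_› ‹_› ‹_› ‹_› ‹_› ‹_› hk').elim
    · exact hk
  refine ⟨Equiv.ofBijective s hbij, t0, t1, t2, t4, t8, t15, ?_, ?_⟩
  · intro i j
    simp only [Equiv.ofBijective_apply]
    rw [hs, Fr_xor, hs i, hs j, t0]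
  · rw [← v15, ← hs, t15]

lemma six (B : Finset α) (hB6 : B.card = 6) {a b c : α} (hab : a ≠ b) (hac : a ≠ c) (hbc : b ≠ c)
    (ha : a ∈ B) (hb : b ∈ B) (hc : c ∈ B) : ∃ d e f, d ∈ B ∧ e ∈ B ∧ f ∈ B ∧
      B = {a, b, c, d, e, f} ∧ a ≠ d ∧ a ≠ e ∧ a ≠ f ∧ b ≠ d ∧ b ≠ e ∧ b ≠ f ∧ c ≠ d ∧ c ≠ e ∧
      c ≠ f ∧ d ≠ e ∧ d ≠ f ∧ e ≠ f := by
  have hs : ({a, b, c} : Finset α) ⊆ B := by simp [Finset.insert_subset_iff, *]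
  have h3 : (B \ {a, b, c}).card = 3 := by
    rw [Finset.card_sdiff_of_subset hs, card3 hab hac hbc, hB6]
  obtain ⟨d, e, f, h1, h2, h4, h5⟩ := Finset.card_eq_three.mp h3
  have hd : d ∈ B \ {a, b, c} := by rw [h5]; simp
  have he : e ∈ B \ {a, b, c} := by rw [h5]; simp
  have hf : f ∈ B \ {a, b, c} := by rw [h5]; simp
  simp only [Finset.mem_sdiff, Finset.mem_insert, Finset.mem_singleton, not_or] at hd he hf
  refine ⟨d, e, f, hd.1, he.1, hf.1, ?_, Ne.symm hd.2.1, Ne.symm he.2.1, Ne.symm hf.2.1,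
    Ne.symm hd.2.2.1, Ne.symm he.2.2.1, Ne.symm hf.2.2.1, Ne.symm hd.2.2.2, Ne.symm he.2.2.2,
    Ne.symm hf.2.2.2, h1, h2, h4⟩
  rw [← Finset.union_sdiff_of_subset hs, h5]
  simp only [Finset.insert_union, Finset.singleton_union]

lemma Good.lab (G : Good D 4 N) (h0 : ∅ ∈ D) {a b c : α} (hab : a ≠ b) (hac : a ≠ c) (hbc : b ≠ c) :
    ∃ σ : Fin 16 ≃ α, σ 0 = a ∧ σ 1 = b ∧ σ 2 = c ∧ Lab D σ := by
  have h3 := G.blk3 h0 (card3 hab hac hbc)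
  obtain ⟨B, hB⟩ : (wd D 6 {a, b, c}).Nonempty := Finset.card_pos.mp (by omega)
  rw [mem_wd] at hB
  have ha : a ∈ B := hB.2.2 (by simp)
  have hb : b ∈ B := hB.2.2 (by simp)
  have hc : c ∈ B := hB.2.2 (by simp)
  obtain ⟨d, e, f, hd, he, hf, hBe, r1, r2, r3, r4, r5, r6, r7, r8, r9, r10, r11, r12⟩ :=
    six B hB.2.1 hab hac hbc ha hb hc
  obtain ⟨σ, s0, s1, s2, s4, s8, s15, hl, -⟩ := G.frame h0 hB.1 hB.2.1 ha hb hc hd he hf hab hac r1 r2 r3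
    hbc r4 r5 r6 r7 r8 r9 r10 r11 r12
  refine ⟨σ, s0, s1, s2, hl, ?_⟩
  rw [s0, s1, s2, s4, s8, s15, ← hBe]
  exact hB.1

lemma Lab.tri {σ : Fin 16 ≃ α} (H : Lab D σ) (i j k : Fin 16) :
    hv D (σ (i ^^^ j ^^^ k)) = hv D (σ i) + hv D (σ j) + hv D (σ k) := by
  rw [H.lin, H.lin, add_right_comm _ _ (hv D (σ k)), add_right_comm _ (hv D (σ 0)),
    add_assoc, add_comm, cancel3]

lemma Lab.Uiff {σ : Fin 16 ≃ α} (H : Lab D σ) (G : Good D 4 N) (h0 : ∅ ∈ D) {i j k l : Fin 16}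
    (hij : i ≠ j) (hik : i ≠ k) (hjk : j ≠ k) (h1 : l ≠ i ∧ l ≠ j ∧ l ≠ k) :
    U D (σ l) (σ i) (σ j) (σ k) ↔ l = i ^^^ j ^^^ k := by
  have hn : ∀ {a b : Fin 16}, a ≠ b → σ a ≠ σ b := fun h => fun h' => h (σ.injective h')
  rw [G.Uiff h0 (hn hij) (hn hik) (hn hjk) ⟨hn h1.1, hn h1.2.1, hn h1.2.2⟩, ← H.tri,
    (G.hinj h0).eq_iff, σ.injective.eq_iff]

lemma xor_eq : ∀ i j k : Fin 16, i ^^^ j = k → j = i ^^^ k := by decide +kernel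

/-- blocks have zero label sum -/
lemma Lab.zs {σ : Fin 16 ≃ α} (H : Lab D σ) (G : Good D 4 N) (h0 : ∅ ∈ D) {i j k l : Fin 16}
    (hij : i ≠ j) (hik : i ≠ k) (hil : i ≠ l) (hjk : j ≠ k) (hjl : j ≠ l) (hkl : k ≠ l)
    (hx : l ≠ i ^^^ j ^^^ k) :
    ∃ e : Fin 16, ({σ i, σ j, σ k, σ l, σ e, σ (i ^^^ j ^^^ k ^^^ l ^^^ e)} : Finset α) ∈ D ∧
      ({σ i, σ j, σ k, σ l, σ e, σ (i ^^^ j ^^^ k ^^^ l ^^^ e)} : Finset α).card = 6 := by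
  have hn : ∀ {a b : Fin 16}, a ≠ b → σ a ≠ σ b := fun h => fun h' => h (σ.injective h')
  have hU := (H.Uiff G h0 hij hik hjk ⟨hil.symm, hjl.symm, hkl.symm⟩).not.mpr hx
  obtain ⟨B, hB⟩ := Finset.nonempty_iff_ne_empty.mpr hU
  rw [mem_wd] at hB
  have ha : σ i ∈ B := hB.2.2 (by simp)
  have hb : σ j ∈ B := hB.2.2 (by simp)
  have hc : σ k ∈ B := hB.2.2 (by simp)
  have hd : σ l ∈ B := hB.2.2 (by simp)
  have hfr : ∃ e f, B = {σ i, σ j, σ k, σ l, e, f} ∧ e ∈ B ∧ f ∈ B ∧ σ i ≠ e ∧ σ i ≠ f ∧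
      σ j ≠ e ∧ σ j ≠ f ∧ σ k ≠ e ∧ σ k ≠ f ∧ σ l ≠ e ∧ σ l ≠ f ∧ e ≠ f := by
    obtain ⟨d, e, f, hd', he, hf, hBe, r1, r2, r3, r4, r5, r6, r7, r8, r9, r10, r11, r12⟩ :=
      six B hB.2.1 (hn hij) (hn hik) (hn hjk) ha hb hc
    have : σ l = d ∨ σ l = e ∨ σ l = f := by
      rw [hBe] at hd
      simp only [Finset.mem_insert, Finset.mem_singleton] at hd
      rcases hd with h | h | h | h
      · exact absurd h (hn hil.symm)
      · exact absurd h (hn hjl.symm)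
      · exact absurd h (hn hkl.symm)
      · exact h
    rcases this with rfl | rfl | rfl
    · exact ⟨e, f, hBe, he, hf, r2, r3, r5, r6, r8, r9, r10, r11, r12⟩
    · refine ⟨d, f, ?_, hd', hf, r1, r3, r4, r6, r7, r9, r10.symm, r12, r11⟩
      rw [hBe, Finset.insert_comm d]
    · refine ⟨d, e, ?_, hd', he, r1, r2, r4, r5, r7, r8, r11.symm, r12.symm, r10⟩
      rw [hBe, Finset.pair_comm e, Finset.insert_comm d]
  obtain ⟨e, f, hBe, he, hf, r1, r2, r3, r4, r5, r6, r7, r8, r9⟩ := hfr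
  obtain ⟨-, -, -, -, -, -, -, -, hfs⟩ := G.frame h0 hB.1 hB.2.1 ha hb hc hd he hf (hn hij) (hn hik)
    (hn hil) r1 r2 (hn hjk) (hn hjl) r3 r4 (hn hkl) r5 r6 r7 r8 r9
  obtain ⟨e', rfl⟩ := σ.surjective e
  have hfe : f = σ (i ^^^ j ^^^ k ^^^ l ^^^ e') := by
    apply G.hinj h0
    rw [hfs, H.tri, H.tri]
  refine ⟨e', ?_⟩
  rw [← hfe, ← hBe]
  exact ⟨hB.1, hB.2.1⟩

end local_part4
end NR

namespace NR

open scoped symmDiff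

def steps : List (Fin 16 × Fin 16 × Fin 16 × Fin 16) := [
  (0, 1, 2, 6), (0, 1, 2, 7), (0, 1, 3, 4), (0, 1, 3, 5), (0, 1, 3, 6), (0, 1, 3, 7),
  (0, 1, 4, 6), (0, 1, 4, 7), (0, 1, 5, 6), (0, 1, 5, 7), (0, 1, 8, 10), (0, 1, 9, 11),
  (0, 2, 3, 4), (0, 2, 3, 5), (0, 2, 3, 6), (0, 2, 3, 7), (0, 2, 4, 5), (0, 2, 4, 7),
  (0, 2, 5, 6), (0, 2, 6, 7), (0, 2, 8, 11), (0, 2, 9, 10), (0, 3, 4, 5), (0, 3, 4, 6),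
  (0, 3, 5, 7), (0, 3, 6, 7), (0, 3, 8, 9), (0, 3, 10, 11), (0, 4, 5, 6), (0, 4, 5, 7),
  (0, 4, 6, 7), (0, 4, 8, 9), (0, 4, 10, 12), (0, 5, 6, 7), (0, 5, 8, 12), (0, 5, 9, 10),
  (0, 6, 8, 10), (0, 6, 9, 12), (0, 7, 8, 9), (0, 7, 11, 13), (1, 2, 3, 4), (1, 2, 3, 5),
  (1, 2, 3, 6), (1, 2, 3, 7), (1, 2, 4, 5), (1, 2, 4, 6), (1, 2, 5, 7), (1, 2, 6, 7),
  (1, 2, 8, 9), (1, 2, 10, 11), (1, 3, 4, 5), (1, 3, 4, 7), (1, 3, 5, 6), (1, 3, 6, 7),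
  (1, 3, 8, 11), (1, 3, 9, 10), (1, 4, 5, 6), (1, 4, 5, 7), (1, 4, 6, 7), (1, 4, 8, 10),
  (1, 4, 9, 13), (1, 5, 6, 7), (1, 5, 8, 9), (1, 5, 11, 12), (1, 6, 8, 9), (1, 6, 10, 12),
  (1, 7, 8, 12), (1, 7, 9, 10), (2, 3, 4, 6), (2, 3, 4, 7), (2, 3, 5, 6), (2, 3, 5, 7),
  (2, 3, 8, 10), (2, 3, 9, 11), (2, 4, 5, 6), (2, 4, 5, 7), (2, 4, 6, 7), (2, 4, 8, 9),
  (2, 4, 11, 12), (2, 5, 6, 7), (2, 5, 8, 10), (2, 5, 9, 12), (2, 6, 8, 13), (2, 6, 9, 10),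
  (2, 7, 8, 9), (2, 7, 10, 12), (3, 4, 5, 6), (3, 4, 5, 7), (3, 4, 6, 7), (3, 4, 8, 12),
  (3, 4, 9, 10), (3, 5, 6, 7), (3, 5, 8, 9), (3, 5, 10, 13), (3, 6, 8, 9), (3, 6, 11, 12),
  (3, 7, 8, 10), (3, 7, 9, 12), (4, 5, 8, 11), (4, 5, 9, 10), (4, 6, 8, 9), (4, 6, 10, 11),
  (4, 7, 8, 10), (4, 7, 9, 11), (5, 6, 8, 10), (5, 6, 9, 11), (5, 7, 8, 9), (5, 7, 10, 11),
  (6, 7, 8, 11), (6, 7, 9, 10)]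

def blk : List ℕ := [
  42688, 22976, 40096, 25504, 51808, 13664, 14992, 50576, 27728, 37712, 22064, 43312,
  53896, 11656, 47176, 18248, 58408, 6952, 33256, 36376, 28952, 5336, 18616, 8824,
  29828, 35716, 7748, 57668, 45604, 19748, 10468, 55316, 10004, 17108, 4532, 33908,
  27148, 38156, 1708, 20588, 41116, 2396, 20098, 45442, 54338, 11074, 30754, 34594,
  4834, 57874, 7442, 35026, 9394, 16754, 13834, 51466, 24778, 3178, 922, 36922,
  44038, 21254, 1478, 49318, 12374, 2614, 6286, 33358, 8494, 17438, 59521, 6017,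
  29249, 36161, 11809, 53537, 17633, 46097, 19217, 8657, 33457, 6257, 23561, 41737,
  2761, 12457, 49241, 1337, 50693, 14597, 37061, 869, 3221, 24629, 16781, 9293,
  34861, 4637, 39427, 25859, 2467, 41059, 20627, 1619, 33931, 4427, 16939, 10267,
  8839, 18503, 33047, 5159]

def octq : List (Fin 16 × Fin 16 × Fin 16 × Fin 16) := [
  (0, 1, 2, 4), (0, 1, 2, 8), (0, 1, 2, 12), (0, 1, 4, 8), (0, 1, 4, 10), (0, 1, 6, 8),
  (0, 1, 6, 10), (0, 2, 4, 8), (0, 2, 4, 9), (0, 2, 5, 8), (0, 2, 5, 9), (0, 3, 4, 8),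
  (0, 3, 4, 9), (0, 3, 5, 8), (0, 3, 5, 9), (1, 2, 4, 8), (1, 2, 4, 9), (1, 2, 5, 8),
  (1, 2, 5, 9), (1, 3, 4, 8), (1, 3, 4, 9), (1, 3, 5, 8), (1, 3, 5, 9), (2, 3, 4, 8),
  (2, 3, 4, 10), (2, 3, 6, 8), (2, 3, 6, 10), (4, 5, 6, 8), (4, 5, 6, 12), (8, 9, 10, 12)]

def hyps : List ℕ := [
  255, 3855, 61455, 13107, 52275, 50115, 15555, 21845, 43605, 42405, 23205, 39321,
  26265, 26985, 38505, 27030, 38550, 39270, 26214, 42330, 23130, 21930, 43690, 49980,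
  15420, 13260, 52428, 4080, 61680, 65280]

def pcA : ℕ → ℕ → ℕ
  | 0, _ => 0
  | f + 1, n => n % 2 + pcA f (n / 2)

def pc (n : ℕ) : ℕ := pcA 16 n

def S (n : ℕ) : Finset (Fin 16) := Finset.univ.filter (fun i : Fin 16 => n.testBit i.val)

lemma mem_S {n : ℕ} {i : Fin 16} : i ∈ S n ↔ n.testBit i.val := by simp [S]

lemma pcA_eq (f : ℕ) : ∀ n : ℕ, pcA f n = ∑ i ∈ Finset.range f, if n.testBit i then 1 else 0 := by
  induction f with
  | zero => intro n; rfl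
  | succ f ih =>
    intro n
    rw [Finset.sum_range_succ', pcA, ih, add_comm]
    congr 1
    · apply Finset.sum_congr rfl
      intro i _
      rw [Nat.testBit_succ]
    · rw [Nat.testBit_zero]
      rcases Nat.mod_two_eq_zero_or_one n with h | h <;> simp [h]

lemma card_S (n : ℕ) : (S n).card = pc n := by
  rw [pc, pcA_eq, S, Finset.card_filter, ← Fin.sum_univ_eq_sum_range (fun i => if n.testBit i then 1 else 0) 16]

lemma S_land (m n : ℕ) : S (m &&& n) = S m ∩ S n := by
  ext i; simp [mem_S]

lemma S_lor (m n : ℕ) : S (m ||| n) = S m ∪ S n := by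
  ext i; simp [mem_S]

lemma S_one (i : Fin 16) : S (1 <<< i.val) = {i} := by
  ext j
  simp only [mem_S, Nat.one_shiftLeft, Nat.testBit_two_pow, Finset.mem_singleton, decide_eq_true_eq]
  rw [Fin.ext_iff, eq_comm]

lemma S_compl : ∀ n, S (65535 ^^^ n) = (S n)ᶜ := by
  intro n
  ext i
  have h : ∀ i : Fin 16, (65535 : ℕ).testBit i.val = true := by decide
  simp [mem_S, Nat.testBit_xor, h]

lemma S_inj {m n : ℕ} (hm : m < 65536) (hn : n < 65536) (h : S m = S n) : m = n := by
  apply Nat.eq_of_testBit_eq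
  intro i
  by_cases hi : i < 16
  · have := Finset.ext_iff.mp h ⟨i, hi⟩
    rw [mem_S, mem_S] at this
    exact Bool.eq_iff_iff.mpr this
  · have h2 : 65536 ≤ 2 ^ i := by
      calc 65536 = 2 ^ 16 := by norm_num
        _ ≤ 2 ^ i := Nat.pow_le_pow_right (by norm_num) (by omega)
    rw [Nat.testBit_lt_two_pow (by omega), Nat.testBit_lt_two_pow (by omega)]

lemma S_surj (s : Finset (Fin 16)) : ∃ n < 65536, S n = s := by
  have hi : Set.InjOn S (Finset.range 65536 : Finset ℕ) := by
    intro a ha b hb h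
    exact S_inj (by simpa using ha) (by simpa using hb) h
  have hc : ((Finset.range 65536).image S).card = 65536 := by
    rw [Finset.card_image_of_injOn hi, Finset.card_range]
  have := Finset.eq_univ_of_card ((Finset.range 65536).image S) (by
    rw [hc, Fintype.card_finset, Fintype.card_fin]; norm_num)
  have hs : s ∈ (Finset.range 65536).image S := by rw [this]; simp
  simpa using hs

def qm (i j k l : Fin 16) : ℕ := 1 <<< i.val ||| 1 <<< j.val ||| 1 <<< k.val ||| 1 <<< l.val

def msk (i j k l e : Fin 16) : ℕ :=
  qm i j k l ||| 1 <<< e.val ||| 1 <<< (i ^^^ j ^^^ k ^^^ l ^^^ e).val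

def msk8 (i j k l : Fin 16) : ℕ :=
  qm i j k l ||| qm (i ^^^ j ^^^ k) (i ^^^ j ^^^ l) (i ^^^ k ^^^ l) (j ^^^ k ^^^ l)

lemma S_qm (i j k l : Fin 16) : S (qm i j k l) = {i, j, k, l} := by
  simp only [qm, S_lor, S_one, Finset.insert_union, Finset.singleton_union]

lemma S_msk (i j k l e : Fin 16) : S (msk i j k l e) = {i, j, k, l, e, i ^^^ j ^^^ k ^^^ l ^^^ e} := by
  simp only [msk, S_lor, S_qm, S_one, Finset.insert_union, Finset.singleton_union]

def okq (i j k l : Fin 16) : Bool :=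
  i != j && i != k && i != l && j != k && j != l && k != l && l != i ^^^ j ^^^ k

def surv (K : List ℕ) (i j k l : Fin 16) : List ℕ :=
  ((List.finRange 16).map (msk i j k l)).filter
    (fun m => pc m == 6 && K.all (fun b => b == m || Nat.ble (pc (b &&& m)) 3))

def step (K : List ℕ) (q : Fin 16 × Fin 16 × Fin 16 × Fin 16) : List ℕ :=
  match surv K q.1 q.2.1 q.2.2.1 q.2.2.2 with
  | [] => K
  | m :: t => if t.all (fun x => x == m) && okq q.1 q.2.1 q.2.2.1 q.2.2.2 then m :: K else K

section local_part5
variable {α : Type*} [Fintype α] [DecidableEq α]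
variable {D : Finset (Finset α)} {N : ℕ}

def Pm (D : Finset (Finset α)) (σ : Fin 16 ≃ α) (s : Finset (Fin 16)) : Prop := s.map σ.toEmbedding ∈ D

lemma Pm.int {σ : Fin 16 ≃ α} (G : Good D 4 N) {s t : Finset (Fin 16)} (hs : Pm D σ s) (ht : Pm D σ t)
    (hst : s.card + t.card < 2 * (s ∩ t).card + 6) : s = t := by
  by_contra hne
  have := G.int hs ht (fun h => hne (Finset.map_injective _ h))
  rw [← Finset.map_inter, Finset.card_map, Finset.card_map, Finset.card_map] at this
  omega

def Inv (D : Finset (Finset α)) (σ : Fin 16 ≃ α) (K : List ℕ) : Prop :=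
  ∀ b ∈ K, Pm D σ (S b) ∧ pc b = 6 ∧ b < 65536

lemma msk_lt (i j k l e : Fin 16) : msk i j k l e < 65536 := by
  have h : ∀ i : Fin 16, 1 <<< i.val < 2 ^ 16 := by decide
  have e : 65536 = 2 ^ 16 := by norm_num
  rw [e]
  unfold msk qm
  repeat' apply Nat.or_lt_two_pow
  all_goals apply h

lemma Lab.surv {σ : Fin 16 ≃ α} (H : Lab D σ) (G : Good D 4 N) (h0 : ∅ ∈ D) {K : List ℕ}
    (hK : Inv D σ K) {i j k l : Fin 16} (hq : okq i j k l = true) :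
    ∃ m ∈ NR.surv K i j k l, Pm D σ (S m) ∧ pc m = 6 ∧ m < 65536 := by
  simp only [okq, Bool.and_eq_true, bne_iff_ne] at hq
  obtain ⟨⟨⟨⟨⟨⟨h1, h2⟩, h3⟩, h4⟩, h5⟩, h6⟩, h7⟩ := hq
  obtain ⟨e, he, he6⟩ := H.zs G h0 h1 h2 h3 h4 h5 h6 h7
  have e1 : (S (msk i j k l e)).map σ.toEmbedding =
      {σ i, σ j, σ k, σ l, σ e, σ (i ^^^ j ^^^ k ^^^ l ^^^ e)} := by
    rw [S_msk]; simp [Finset.map_insert]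
  rw [← e1] at he he6
  rw [Finset.card_map, card_S] at he6
  refine ⟨msk i j k l e, ?_, he, he6, msk_lt _ _ _ _ _⟩
  unfold NR.surv
  rw [List.mem_filter]
  refine ⟨List.mem_map.mpr ⟨e, List.mem_finRange e, rfl⟩, ?_⟩
  simp only [he6, beq_self_eq_true, Bool.true_and, List.all_eq_true, Bool.or_eq_true, beq_iff_eq]
  intro b hb
  obtain ⟨hb1, hb2, hb3⟩ := hK b hb
  by_cases hc : pc (b &&& msk i j k l e) ≤ 3
  · right; exact Nat.ble_eq.mpr hc
  · left
    apply S_inj hb3 (msk_lt _ _ _ _ _)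
    apply Pm.int G hb1 he
    rw [← S_land, card_S, card_S, card_S]
    omega

lemma Lab.step {σ : Fin 16 ≃ α} (H : Lab D σ) (G : Good D 4 N) (h0 : ∅ ∈ D) {K : List ℕ}
    (hK : Inv D σ K) (q : Fin 16 × Fin 16 × Fin 16 × Fin 16) : Inv D σ (NR.step K q) := by
  unfold NR.step
  split
  · exact hK
  · rename_i m t hs
    split_ifs with hc
    · rw [Bool.and_eq_true] at hc
      obtain ⟨m', hm', hp⟩ := H.surv G h0 hK hc.2
      rw [hs] at hm'
      have : m' = m := by
        rcases List.mem_cons.mp hm' with h | h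
        · exact h
        · have := List.all_eq_true.mp hc.1 m' h
          simpa using this
      subst this
      intro b hb
      rcases List.mem_cons.mp hb with h | h
      · rw [h]; exact hp
      · exact hK b h
    · exact hK

lemma Lab.run {σ : Fin 16 ≃ α} (H : Lab D σ) (G : Good D 4 N) (h0 : ∅ ∈ D)
    (qs : List (Fin 16 × Fin 16 × Fin 16 × Fin 16)) : ∀ {K : List ℕ},
    Inv D σ K → Inv D σ (qs.foldl NR.step K) := by
  induction qs with
  | nil => intro K hK; exact hK
  | cons q qs ih =>
    intro K hK
    rw [List.foldl_cons]
    apply ih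
    exact H.step G h0 hK q

lemma run_eq : steps.foldl step [33047, 5159] = blk := by decide +kernel

end local_part5

end NR

namespace NR

open scoped symmDiff

section local_part6
variable {α : Type*} [Fintype α] [DecidableEq α]
variable {D : Finset (Finset α)} {N : ℕ}

/-- every set of size at least five contains a covered quad -/
lemma Good.coverQ (G : Good D 4 N) (h0 : ∅ ∈ D) {u : Finset α} (hu : 5 ≤ u.card) :
    ∃ x ⊆ u, x.card = 4 ∧ (wd D 6 x).Nonempty := by
  obtain ⟨T, hT, hT3⟩ := Finset.exists_subset_card_eq (s := u) (n := 3) (by omega)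
  have h2 : 1 < (u \ T).card := by rw [Finset.card_sdiff_of_subset hT]; omega
  obtain ⟨p, hp, q, hq, hpq⟩ := Finset.one_lt_card.mp h2
  rw [Finset.mem_sdiff] at hp hq
  by_contra hcon
  push Not at hcon
  apply hpq
  apply G.uniqU h0 hT3 hp.2 hq.2
  · exact hcon _ (Finset.insert_subset hp.1 hT) (by rw [Finset.card_insert_of_notMem hp.2, hT3])
  · exact hcon _ (Finset.insert_subset hq.1 hT) (by rw [Finset.card_insert_of_notMem hq.2, hT3])

lemma sort4 (y : Finset (Fin 16)) (hy : y.card = 4) :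
    ∃ i j k l, i < j ∧ j < k ∧ k < l ∧ y = {i, j, k, l} := by
  let f := y.orderEmbOfFin hy
  refine ⟨f 0, f 1, f 2, f 3, f.strictMono (by decide), f.strictMono (by decide),
    f.strictMono (by decide), ?_⟩
  ext a
  have h : a ∈ y ↔ ∃ t, f t = a := by
    rw [← Finset.mem_coe, ← Finset.range_orderEmbOfFin y hy]; rfl
  rw [h]
  constructor
  · rintro ⟨t, rfl⟩
    fin_cases t <;> simp
  · intro h
    simp only [Finset.mem_insert, Finset.mem_singleton] at h
    rcases h with h | h | h | h <;> exact ⟨_, h.symm⟩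

lemma xor_ne : ∀ i j k : Fin 16, i ≠ j → i ≠ k → j ≠ k →
    i ^^^ j ^^^ k ≠ i ∧ i ^^^ j ^^^ k ≠ j ∧ i ^^^ j ^^^ k ≠ k := by decide +kernel

lemma okq_iff {i j k l : Fin 16} : okq i j k l = true ↔
    i ≠ j ∧ i ≠ k ∧ i ≠ l ∧ j ≠ k ∧ j ≠ l ∧ k ≠ l ∧ l ≠ i ^^^ j ^^^ k := by
  simp only [okq, Bool.and_eq_true, bne_iff_ne, and_assoc]

lemma Lab.clo {σ : Fin 16 ≃ α} (H : Lab D σ) (G : Good D 4 N) (h0 : ∅ ∈ D) {O : Finset α}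
    (hO : O ∈ D) (hO8 : O.card = 8) {i j k : Fin 16} (hij : i ≠ j) (hik : i ≠ k) (hjk : j ≠ k)
    (hi : σ i ∈ O) (hj : σ j ∈ O) (hk : σ k ∈ O) : σ (i ^^^ j ^^^ k) ∈ O := by
  have hn : ∀ {a b : Fin 16}, a ≠ b → σ a ≠ σ b := fun h => fun h' => h (σ.injective h')
  have hx := xor_ne i j k hij hik hjk
  exact G.clo h0 hO hO8 (hn hij) (hn hik) (hn hjk) ⟨hn hx.1, hn hx.2.1, hn hx.2.2⟩
    ((H.Uiff G h0 hij hik hjk hx).mpr rfl) hi hj hk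

lemma Lab.sub8 {σ : Fin 16 ≃ α} (H : Lab D σ) (G : Good D 4 N) (h0 : ∅ ∈ D) {O : Finset α}
    (hO : O ∈ D) (hO8 : O.card = 8) {i j k l : Fin 16} (hq : okq i j k l = true)
    (hs : ({i, j, k, l} : Finset (Fin 16)).map σ.toEmbedding ⊆ O) :
    (S (msk8 i j k l)).map σ.toEmbedding ⊆ O := by
  obtain ⟨h1, h2, h3, h4, h5, h6, -⟩ := okq_iff.mp hq
  simp only [Finset.map_insert, Finset.map_singleton, Finset.insert_subset_iff,
    Finset.singleton_subset_iff, Equiv.coe_toEmbedding] at hs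
  obtain ⟨hi, hj, hk, hl⟩ := hs
  rw [msk8, S_lor, S_qm, S_qm, Finset.map_union]
  apply Finset.union_subset
  · simp only [Finset.map_insert, Finset.map_singleton, Finset.insert_subset_iff,
      Finset.singleton_subset_iff, Equiv.coe_toEmbedding]
    exact ⟨hi, hj, hk, hl⟩
  · simp only [Finset.map_insert, Finset.map_singleton, Finset.insert_subset_iff,
      Finset.singleton_subset_iff, Equiv.coe_toEmbedding]
    exact ⟨H.clo G h0 hO hO8 h1 h2 h4 hi hj hk, H.clo G h0 hO hO8 h1 h3 h5 hi hj hl,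
      H.clo G h0 hO hO8 h2 h3 h6 hi hk hl, H.clo G h0 hO hO8 h4 h5 h6 hj hk hl⟩

lemma set_rot (i j k l : α) : ({l, i, j, k} : Finset α) = {i, j, k, l} := by
  ext; simp; tauto

lemma Lab.cov {σ : Fin 16 ≃ α} (H : Lab D σ) (G : Good D 4 N) (h0 : ∅ ∈ D) {i j k l : Fin 16}
    (h1 : i ≠ j) (h2 : i ≠ k) (h3 : i ≠ l) (h4 : j ≠ k) (h5 : j ≠ l) (h6 : k ≠ l) :
    (wd D 6 (({i, j, k, l} : Finset (Fin 16)).map σ.toEmbedding)).Nonempty ↔ l ≠ i ^^^ j ^^^ k := by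
  rw [Ne, ← H.Uiff G h0 h1 h2 h4 ⟨h3.symm, h5.symm, h6.symm⟩, U, Finset.nonempty_iff_ne_empty,
    set_rot (σ i)]
  simp only [Finset.map_insert, Finset.map_singleton, Equiv.coe_toEmbedding, Ne]

lemma card4 {i j k l : Fin 16} (hq : okq i j k l = true) : ({i, j, k, l} : Finset (Fin 16)).card = 4 := by
  obtain ⟨h1, h2, h3, h4, h5, h6, -⟩ := okq_iff.mp hq
  rw [Finset.card_insert_of_notMem (by simp [*]), card3 h4 h5 h6]

lemma Lab.oct {σ : Fin 16 ≃ α} (H : Lab D σ) (G : Good D 4 N) (h0 : ∅ ∈ D) {i j k l : Fin 16}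
    (hq : okq i j k l = true) (h8 : pc (msk8 i j k l) = 8) : Pm D σ (S (msk8 i j k l)) := by
  obtain ⟨h1, h2, h3, h4, h5, h6, h7⟩ := okq_iff.mp hq
  have hc := (H.cov G h0 h1 h2 h3 h4 h5 h6).mpr h7
  have h := G.oct4 h0 (x := ({i, j, k, l} : Finset (Fin 16)).map σ.toEmbedding)
    (by rw [Finset.card_map, card4 hq]) hc.ne_empty
  obtain ⟨O, hO⟩ := Finset.card_pos.mp (by omega : 0 < (wd D 8 (({i, j, k, l} : Finset (Fin 16)).map σ.toEmbedding)).card)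
  rw [mem_wd] at hO
  have hs := H.sub8 G h0 hO.1 hO.2.1 hq hO.2.2
  have := Finset.eq_of_subset_of_card_le hs (by rw [Finset.card_map, card_S, h8, hO.2.1])
  rw [Pm, this]
  exact hO.1

lemma octq_all : octq.all (fun q => okq q.1 q.2.1 q.2.2.1 q.2.2.2 &&
    pc (msk8 q.1 q.2.1 q.2.2.1 q.2.2.2) == 8) = true := by decide +kernel

lemma octq_ok (q) (hq : q ∈ octq) : okq q.1 q.2.1 q.2.2.1 q.2.2.2 = true ∧
    pc (msk8 q.1 q.2.1 q.2.2.1 q.2.2.2) = 8 := by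
  have := List.all_eq_true.mp octq_all q hq
  rwa [Bool.and_eq_true, beq_iff_eq] at this

lemma hyps_eq : octq.map (fun q => msk8 q.1 q.2.1 q.2.2.1 q.2.2.2) = hyps := by decide +kernel

lemma quad_chk : ∀ i j : Fin 16, i < j → ∀ k : Fin 16, j < k → ∀ l : Fin 16, k < l → l ≠ i ^^^ j ^^^ k →
    (hyps.contains (msk8 i j k l) = true ∧ pc (msk8 i j k l) = 8 ∧
    blk.any (fun b => b &&& qm i j k l == qm i j k l) = true) := by decide +kernel

lemma Lab.hyp {σ : Fin 16 ≃ α} (H : Lab D σ) (G : Good D 4 N) (h0 : ∅ ∈ D) :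
    ∀ n ∈ hyps, Pm D σ (S n) := by
  intro n hn
  rw [← hyps_eq] at hn
  obtain ⟨q, hq, rfl⟩ := List.mem_map.mp hn
  exact H.oct G h0 (octq_ok q hq).1 (octq_ok q hq).2

/-- pick a covered sorted quad in a set -/
lemma Lab.pickq {σ : Fin 16 ≃ α} (H : Lab D σ) (G : Good D 4 N) (h0 : ∅ ∈ D) {s : Finset (Fin 16)}
    (hs : 5 ≤ s.card) : ∃ i j k l : Fin 16, i < j ∧ j < k ∧ k < l ∧ l ≠ i ^^^ j ^^^ k ∧ 
    ({i, j, k, l} : Finset (Fin 16)) ⊆ s ∧ okq i j k l = true := by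
  obtain ⟨x, hx, hx4, hc⟩ := G.coverQ h0 (u := s.map σ.toEmbedding) (by rwa [Finset.card_map])
  obtain ⟨i, j, k, l, h1, h2, h3, he⟩ := sort4 (x.map σ.symm.toEmbedding) (by rwa [Finset.card_map])
  have hxe : x = ({i, j, k, l} : Finset (Fin 16)).map σ.toEmbedding := by
    rw [← he, Finset.map_map]
    simp
  have n1 : i ≠ j := h1.ne
  have n2 : i ≠ k := (h1.trans h2).ne
  have n3 : i ≠ l := (h1.trans (h2.trans h3)).ne
  have n4 : j ≠ k := h2.ne
  have n5 : j ≠ l := (h2.trans h3).ne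
  have n6 : k ≠ l := h3.ne
  rw [hxe] at hc hx
  have h7 := (H.cov G h0 n1 n2 n3 n4 n5 n6).mp hc
  exact ⟨i, j, k, l, h1, h2, h3, h7, Finset.map_subset_map.mp hx, okq_iff.mpr ⟨n1, n2, n3, n4, n5, n6, h7⟩⟩

lemma Lab.oct_all {σ : Fin 16 ≃ α} (H : Lab D σ) (G : Good D 4 N) (h0 : ∅ ∈ D) {s : Finset (Fin 16)}
    (hs : Pm D σ s) (h8 : s.card = 8) : ∃ n ∈ hyps, S n = s := by
  obtain ⟨i, j, k, l, h1, h2, h3, h4, h5, h6⟩ := H.pickq G h0 (s := s) (by omega)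
  obtain ⟨c1, c2, -⟩ := quad_chk i j h1 k h2 l h3 h4
  refine ⟨msk8 i j k l, by simpa using c1, ?_⟩
  have := H.sub8 G h0 hs (by rwa [Finset.card_map]) h6 (Finset.map_subset_map.mpr h5)
  exact Finset.eq_of_subset_of_card_le (Finset.map_subset_map.mp this) (by rw [card_S, c2, h8])

lemma Lab.blk_all {σ : Fin 16 ≃ α} (H : Lab D σ) (G : Good D 4 N) (h0 : ∅ ∈ D) (hI : Inv D σ blk)
    {s : Finset (Fin 16)}
    (hs : Pm D σ s) (h6 : s.card = 6 ∨ s.card = 7) : ∃ n ∈ blk, S n = s := by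
  obtain ⟨i, j, k, l, h1, h2, h3, h4, h5, hq⟩ := H.pickq G h0 (s := s) (by omega)
  obtain ⟨-, -, c3⟩ := quad_chk i j h1 k h2 l h3 h4
  obtain ⟨b, hb, hb2⟩ := List.any_eq_true.mp c3
  rw [beq_iff_eq] at hb2
  refine ⟨b, hb, ?_⟩
  obtain ⟨i1, i2, i3⟩ := hI b hb
  apply Pm.int G i1 hs
  rw [card_S, i2]
  have : ({i, j, k, l} : Finset (Fin 16)) ⊆ S b ∩ s := by
    apply Finset.subset_inter _ h5
    rw [← S_qm, ← hb2, S_land]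
    exact Finset.inter_subset_left
  have := Finset.card_le_card this
  rw [card4 hq] at this
  omega

lemma hyps_comp : 27030 ∈ hyps ∧ 65535 ^^^ 27030 ∈ hyps := by decide +kernel

lemma Lab.compl {σ : Fin 16 ≃ α} (H : Lab D σ) (G : Good D 4 N) (h0 : ∅ ∈ D) {s : Finset (Fin 16)}
    (hs : Pm D σ s) : Pm D σ sᶜ := by
  have a1 := H.hyp G h0 _ hyps_comp.1
  have a2 := H.hyp G h0 _ hyps_comp.2
  have hc : ∀ c d : Finset α, (c ∆ d).card = 16 → d = cᶜ := by
    intro c d h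
    have : c ∆ d = Finset.univ := by
      apply Finset.eq_univ_of_card; rw [h, G.hα]
    ext a
    have := Finset.ext_iff.mp this a
    simp only [Finset.mem_symmDiff, Finset.mem_univ, iff_true] at this
    rw [Finset.mem_compl]
    tauto
  have hm : ∀ t : Finset (Fin 16), tᶜ.map σ.toEmbedding = (t.map σ.toEmbedding)ᶜ := by
    intro t
    ext a
    obtain ⟨i, rfl⟩ := σ.surjective a
    simp
  obtain ⟨d, hd, hd2⟩ := G.c16 _ a1 _ a2 (by
    rw [S_compl, hm, symmDiff_compl_self, Finset.top_eq_univ, Finset.card_univ, G.hα]) _ hs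
  rw [hc _ _ hd2, ← hm] at hd
  exact hd

def tau : Equiv.Perm (Fin 16) where
  toFun := ![0, 1, 2, 3, 8, 9, 10, 11, 4, 5, 6, 7, 12, 13, 14, 15]
  invFun := ![0, 1, 2, 3, 8, 9, 10, 11, 4, 5, 6, 7, 12, 13, 14, 15]
  left_inv := by decide
  right_inv := by decide

lemma tau_xor : ∀ i j : Fin 16, tau (i ^^^ j) = tau i ^^^ tau j := by decide +kernel

lemma Lab.tau {σ : Fin 16 ≃ α} (H : Lab D σ) : Lab D (NR.tau.trans σ) := by
  constructor
  · intro i j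
    simp only [Equiv.trans_apply, tau_xor]
    exact H.lin _ _
  · have := H.b0
    have e : ({σ 0, σ 1, σ 2, σ 4, σ 8, σ 15} : Finset α) = {σ 0, σ 1, σ 2, σ 8, σ 4, σ 15} := by
      congr 3; exact Finset.insert_comm _ _ _
    rw [e] at this
    exact this

lemma surv_eq : ∀ m ∈ surv [33047] 0 1 2 5, m = 5159 ∨ m = 10279 := by decide +kernel

lemma S_b0 : S 33047 = {0, 1, 2, 4, 8, 15} := by decide +kernel

lemma tau_S : (S 10279).map tau.toEmbedding = S 8839 := by decide +kernel

lemma Lab.two {σ : Fin 16 ≃ α} (H : Lab D σ) (G : Good D 4 N) (h0 : ∅ ∈ D) :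
    Inv D σ [33047] ∧ (Inv D σ [33047, 5159] ∨ Pm D σ (S 10279)) := by
  have hb : Inv D σ [33047] := by
    intro b hb
    rw [List.mem_singleton] at hb
    subst hb
    refine ⟨?_, by decide +kernel, by norm_num⟩
    rw [Pm, S_b0]
    simpa [Finset.map_insert] using H.b0
  refine ⟨hb, ?_⟩
  obtain ⟨m, hm, hp, h6, hlt⟩ := H.surv G h0 hb (i := 0) (j := 1) (k := 2) (l := 5) (by decide)
  rcases surv_eq m hm with rfl | rfl
  · left
    intro b hb'
    rcases List.mem_cons.mp hb' with h | h
    · exact hb b (by simp [h])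
    · rw [List.mem_singleton] at h; subst h; exact ⟨hp, h6, hlt⟩
  · right; exact hp

lemma Good.lab2 (G : Good D 4 N) (h0 : ∅ ∈ D) {a b c : α} (hab : a ≠ b) (hac : a ≠ c) (hbc : b ≠ c) :
    ∃ σ : Fin 16 ≃ α, σ 0 = a ∧ σ 1 = b ∧ σ 2 = c ∧ Lab D σ ∧ Inv D σ blk := by
  obtain ⟨σ, s0, s1, s2, H⟩ := G.lab h0 hab hac hbc
  rcases (H.two G h0).2 with h | h
  · refine ⟨σ, s0, s1, s2, H, ?_⟩
    rw [← run_eq]; exact H.run G h0 _ h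
  have H' := H.tau
  rcases (H'.two G h0).2 with h' | h'
  · refine ⟨NR.tau.trans σ, s0, s1, s2, H', ?_⟩
    rw [← run_eq]; exact H'.run G h0 _ h'
  exfalso
  have h2 : Pm D σ (S 8839) := by
    rw [← tau_S, Pm, Finset.map_map]
    exact h'
  have := Pm.int G h h2 (by rw [← S_land, card_S, card_S, card_S]; decide +kernel)
  exact absurd (S_inj (by norm_num) (by norm_num) this) (by norm_num)

def NRl : List ℕ := 0 :: 65535 :: (hyps ++ blk ++ blk.map (fun n => 65535 ^^^ n))

theorem Good.main (G : Good D 4 N) (h0 : ∅ ∈ D) {a b c : α} (hab : a ≠ b) (hac : a ≠ c)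
    (hbc : b ≠ c) : ∃ σ : Fin 16 ≃ α, σ 0 = a ∧ σ 1 = b ∧ σ 2 = c ∧
      (∀ s : Finset (Fin 16), s.map σ.toEmbedding ∈ D ↔ ∃ n ∈ NRl, S n = s) ∧
      (∀ d, d ≠ a → d ≠ b → d ≠ c → U D d a b c → d = σ 3) := by
  obtain ⟨σ, s0, s1, s2, H, hI⟩ := G.lab2 h0 hab hac hbc
  have he : Pm D σ (S 0) := by
    have : S 0 = ∅ := by decide +kernel
    rw [Pm, this, Finset.map_empty]; exact h0
  refine ⟨σ, s0, s1, s2, ?_, ?_⟩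
  · intro s
    constructor
    · intro hs
      have hs : Pm D σ s := hs
      have hcs := H.compl G h0 hs
      have lo : ∀ t, Pm D σ t → t ≠ ∅ → 6 ≤ t.card := by
        intro t ht hne
        have := G.card6 h0 ht (by simpa using hne)
        rwa [Finset.card_map] at this
      have h7 : ∀ t, Pm D σ t → t.card ≠ 7 := by
        intro t ht ht7
        obtain ⟨n, hn, hnt⟩ := H.blk_all G h0 hI ht (Or.inr ht7)
        have := (hI n hn).2.1
        rw [← card_S, hnt] at this
        omega
      have hcc : sᶜ.card = 16 - s.card := by rw [Finset.card_compl, Fintype.card_fin]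
      have hle : s.card ≤ 16 := by simpa using Finset.card_le_univ s
      by_cases e0 : s = ∅
      · exact ⟨0, by simp [NRl], by rw [e0]; decide +kernel⟩
      by_cases e1 : sᶜ = ∅
      · refine ⟨65535, by simp [NRl], ?_⟩
        rw [← compl_compl s, e1]; decide +kernel
      have l1 := lo _ hs e0
      have l2 := lo _ hcs e1
      have l3 := h7 _ hs
      have l4 := h7 _ hcs
      have : s.card = 6 ∨ s.card = 8 ∨ s.card = 10 := by omega
      rcases this with h | h | h
      · obtain ⟨n, hn, hnt⟩ := H.blk_all G h0 hI hs (Or.inl h)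
        exact ⟨n, by simp [NRl, hn], hnt⟩
      · obtain ⟨n, hn, hnt⟩ := H.oct_all G h0 hs h
        exact ⟨n, by simp [NRl, hn], hnt⟩
      · obtain ⟨n, hn, hnt⟩ := H.blk_all G h0 hI hcs (Or.inl (by omega))
        refine ⟨65535 ^^^ n, ?_, by rw [S_compl, hnt, compl_compl]⟩
        simp only [NRl, List.mem_cons, List.mem_append, List.mem_map]
        right; right; right
        exact ⟨n, hn, rfl⟩
    · rintro ⟨n, hn, rfl⟩
      simp only [NRl, List.mem_cons, List.mem_append, List.mem_map] at hn
      rcases hn with rfl | rfl | (hn | hn) | ⟨m, hm, rfl⟩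
      · exact he
      · have := H.compl G h0 he
        rw [← S_compl] at this
        exact this
      · exact H.hyp G h0 n hn
      · exact (hI n hn).1
      · rw [S_compl]
        exact H.compl G h0 (hI m hm).1
  · intro d h1 h2 h3 hU
    obtain ⟨l, rfl⟩ := σ.surjective d
    rw [← s0, ← s1, ← s2] at hU
    rw [← s0] at h1
    rw [← s1] at h2
    rw [← s2] at h3
    have := (H.Uiff G h0 (by decide) (by decide) (by decide)
      ⟨fun h => h1 (by rw [h]), fun h => h2 (by rw [h]), fun h => h3 (by rw [h])⟩).mp hU
    rw [this]
    rfl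

end local_part6

end NR

namespace NR

open scoped symmDiff

abbrev V := Fin 16 → ZMod 2

def ind (s : Finset (Fin 16)) : V := fun i => if i ∈ s then 1 else 0

def supp (x : V) : Finset (Fin 16) := Finset.univ.filter (fun i => x i = 1)

lemma zm : ∀ a : ZMod 2, a = 0 ∨ a = 1 := by decide

lemma ind_supp (x : V) : ind (supp x) = x := by
  funext i
  rcases zm (x i) with h | h <;> simp [ind, supp, h]

lemma supp_ind (s : Finset (Fin 16)) : supp (ind s) = s := by
  ext i; simp [ind, supp]

lemma ind_inj {s t : Finset (Fin 16)} (h : ind s = ind t) : s = t := by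
  rw [← supp_ind s, h, supp_ind]

lemma addv (x v : V) : x + v + v = x := by
  funext i
  simp only [Pi.add_apply]
  generalize x i = a
  generalize v i = b
  revert a b
  decide

lemma ex_ind (y v : V) : ∃ s, y = ind s + v := ⟨supp (y + v), by rw [ind_supp, addv]⟩

lemma hdist (s t : Finset (Fin 16)) (v : V) : hammingDist (ind s + v) (ind t + v) = (s ∆ t).card := by
  unfold hammingDist
  congr 1
  ext i
  simp only [Finset.mem_filter, Finset.mem_univ, true_and, Pi.add_apply, ne_eq, add_left_inj,
    Finset.mem_symmDiff, ind]
  by_cases h1 : i ∈ s <;> by_cases h2 : i ∈ t <;> simp [h1, h2]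

open Classical in
noncomputable def Dc (C : Set V) (v : V) : Finset (Finset (Fin 16)) :=
  Finset.univ.filter (fun s => ind s + v ∈ C)

lemma mem_Dc {C : Set V} {v : V} {s : Finset (Fin 16)} : s ∈ Dc C v ↔ ind s + v ∈ C := by
  simp [Dc]

lemma cnt (C : Set V) (v : V) (x : Finset (Fin 16)) (k : ℕ) :
    ((Dc C v).filter (fun c => (x ∆ c).card = k)).card =
      {c ∈ C | hammingDist (ind x + v) c = k}.ncard := by
  have hi : Function.Injective (fun s => ind s + v) := by
    intro s t h
    exact ind_inj (add_right_cancel h)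
  rw [← Set.ncard_coe_finset, ← Set.ncard_image_of_injective _ hi]
  congr 1
  ext y
  simp only [Set.mem_image, Finset.coe_filter, Set.mem_ofPred_eq, mem_Dc]
  constructor
  · rintro ⟨s, ⟨h1, h2⟩, rfl⟩
    exact ⟨h1, by rw [hdist, h2]⟩
  · rintro ⟨h1, h2⟩
    obtain ⟨s, rfl⟩ := ex_ind y v
    exact ⟨s, ⟨h1, by rw [← h2, hdist]⟩, rfl⟩

lemma dist_le {C : Set V} {x c : V} (hc : c ∈ C) : distToCode C x ≤ hammingDist x c :=
  Nat.sInf_le ⟨c, hc, rfl⟩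

lemma dist_ex {C : Set V} (hC : C.Nonempty) (x : V) : ∃ c ∈ C, hammingDist x c = distToCode C x := by
  obtain ⟨c, hc⟩ := hC
  exact Nat.sInf_mem (s := {d | ∃ c ∈ C, hammingDist x c = d}) ⟨_, c, hc, rfl⟩

lemma dist_eq {C : Set V} {x c : V} {k : ℕ} (hc : c ∈ C) (hk : hammingDist x c = k)
    (h : ∀ c' ∈ C, k ≤ hammingDist x c') : distToCode C x = k := by
  apply le_antisymm
  · rw [← hk]; exact dist_le hc
  · obtain ⟨c', h1, h2⟩ := dist_ex ⟨c, hc⟩ x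
    rw [← h2]; exact h c' h1

lemma dist3 {C : Set V} (hd : IsMinDist C 6) {x c : V} (hc : c ∈ C) (hk : hammingDist x c = 3) :
    distToCode C x = 3 := by
  apply dist_eq hc hk
  intro c' hc'
  by_cases h : c = c'
  · rw [← h, hk]
  · have h1 := hd.1 c hc c' hc' h
    have h2 := hammingDist_triangle c x c'
    rw [hammingDist_comm c x] at h2
    omega

lemma pos_of {C : Set V} {x c : V} {k : ℕ} (hc : c ∈ C) (hk : hammingDist x c = k) :
    0 < {c ∈ C | hammingDist x c = k}.ncard := by
  rw [Set.ncard_pos]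
  exact ⟨c, hc, hk⟩

lemma good (C : Set V) (hreg : IsCompletelyRegular C) (hd : IsMinDist C 6) :
    ∃ L N, ∀ v, Good (Dc C v) L N := by
  -- midpoint
  obtain ⟨γ, c1, hc1, c2, hc2, hne, hγ1, hγ2⟩ : ∃ γ : V, ∃ c1 ∈ C, ∃ c2 ∈ C, c1 ≠ c2 ∧
      hammingDist γ c1 = 3 ∧ hammingDist γ c2 = 3 := by
    obtain ⟨x, hx, y, hy, hxy, h6⟩ := hd.2
    obtain ⟨a, rfl⟩ := ex_ind x 0
    obtain ⟨b, rfl⟩ := ex_ind y 0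
    rw [hdist] at h6
    obtain ⟨T, hT, hT3⟩ := Finset.exists_subset_card_eq (s := a ∆ b) (n := 3) (by omega)
    refine ⟨ind (a ∆ T) + 0, _, hx, _, hy, hxy, ?_, ?_⟩
    · rw [hdist, symmDiff_comm a T, symmDiff_assoc, symmDiff_self, Finset.bot_eq_empty, sde, hT3]
    · rw [hdist, symmDiff_right_comm]
      have := sd (a ∆ b) T
      rw [Finset.inter_eq_right.mpr hT] at this
      omega
  have h2 : 2 ≤ {c ∈ C | hammingDist γ c = 3}.ncard := by
    have := Set.ncard_le_ncard (s := {c1, c2}) (t := {c ∈ C | hammingDist γ c = 3}) (by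
      intro z hz
      rcases hz with rfl | hz
      · exact ⟨hc1, hγ1⟩
      · rw [Set.mem_singleton_iff] at hz; subst hz; exact ⟨hc2, hγ2⟩) (Set.toFinite _)
    rwa [Set.ncard_pair hne] at this
  obtain ⟨N, hN⟩ : ∃ N, ∀ x, distToCode C x = 4 → {c ∈ C | hammingDist x c = 4}.ncard = N := by
    by_cases h : ∃ y, distToCode C y = 4
    · obtain ⟨y, hy⟩ := h
      exact ⟨_, fun x hx => hreg x y (by rw [hx, hy]) 4⟩
    · exact ⟨0, fun x hx => absurd ⟨x, hx⟩ h⟩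
  refine ⟨{c ∈ C | hammingDist γ c = 3}.ncard - 1, N, fun v => ⟨?_, ?_, ?_, ?_, by omega, by simp⟩⟩
  · intro c hc c' hc' hcc
    rw [mem_Dc] at hc hc'
    rw [← hdist c c' v]
    exact hd.1 _ hc _ hc' (fun h => hcc (ind_inj (add_right_cancel h)))
  · rintro x ⟨c, hc, h⟩
    rw [mem_Dc] at hc
    rw [← hdist x c v] at h
    rw [cnt, hreg _ γ (by rw [dist3 hd hc h, dist3 hd hc1 hγ1]) 3]
    exact (Nat.sub_add_cancel (le_trans (by norm_num) h2)).symm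
  · rintro x ⟨c, hc, h⟩ hall
    rw [mem_Dc] at hc
    rw [← hdist x c v] at h
    rw [cnt]
    apply hN
    apply dist_eq hc h
    intro c' hc'
    obtain ⟨s, rfl⟩ := ex_ind c' v
    rw [hdist]
    exact hall s (mem_Dc.mpr hc')
  · intro c hc c' hc' h d hdd
    rw [mem_Dc] at hc hc' hdd
    rw [← hdist c c' v] at h
    have h0 : ∀ z ∈ C, distToCode C z = 0 := fun z hz =>
      dist_eq hz (hammingDist_self z) (fun _ _ => Nat.zero_le _)
    have hp := pos_of hc' h
    rw [hreg _ (ind d + v) (by rw [h0 _ hc, h0 _ hdd]) 16, Set.ncard_pos] at hp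
    obtain ⟨e, he, he2⟩ := hp
    obtain ⟨s, rfl⟩ := ex_ind e v
    exact ⟨s, mem_Dc.mpr he, (hdist d s v).symm.trans he2⟩

def F (i : ℕ) : Finset (Fin 16) := Finset.univ.filter (fun j => j.val < i)

lemma F0 : F 0 = ∅ := by decide
lemma F1 : F 1 = {0} := by decide
lemma F2 : F 2 = {0, 1} := by decide
lemma F3 : F 3 = {0, 1, 2} := by decide
lemma F4 : F 4 = {0, 1, 2, 3} := by decide

lemma ex_frame {D : Finset (Finset (Fin 16))} {N : ℕ} (G : Good D 4 N) (h0 : ∅ ∈ D)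
    (u : Finset (Fin 16)) (hu : u.card ≤ 3 ∨ (u.card = 4 ∧ wd D 6 u = ∅)) :
    ∃ σ : Equiv.Perm (Fin 16), (F u.card).map σ.toEmbedding = u ∧
      ∀ s : Finset (Fin 16), s.map σ.toEmbedding ∈ D ↔ ∃ n ∈ NRl, S n = s := by
  have key : ∀ n, u.card = n → ∃ σ : Equiv.Perm (Fin 16), (F n).map σ.toEmbedding = u ∧
      ∀ s : Finset (Fin 16), s.map σ.toEmbedding ∈ D ↔ ∃ n ∈ NRl, S n = s := by
    intro n hn
    have : n = 0 ∨ n = 1 ∨ n = 2 ∨ n = 3 ∨ n = 4 := by omega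
    rcases this with rfl | rfl | rfl | rfl | rfl
    · obtain ⟨σ, -, -, -, h, -⟩ := G.main h0 (a := 0) (b := 1) (c := 2) (by decide) (by decide) (by decide)
      refine ⟨σ, ?_, h⟩
      rw [Finset.card_eq_zero.mp hn, F0, Finset.map_empty]
    · obtain ⟨a, rfl⟩ := Finset.card_eq_one.mp hn
      obtain ⟨b, hb⟩ := G.pick {a} (by simp)
      obtain ⟨c, hc⟩ := G.pick {a, b} (Finset.card_le_two.trans_lt (by norm_num))
      simp only [Finset.mem_insert, Finset.mem_singleton, not_or] at hb hc
      obtain ⟨σ, s0, -, -, h, -⟩ := G.main h0 (a := a) (b := b) (c := c)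
        (Ne.symm hb) (Ne.symm hc.1) (Ne.symm hc.2)
      refine ⟨σ, ?_, h⟩
      simp [F1, s0]
    · obtain ⟨a, b, hab, rfl⟩ := Finset.card_eq_two.mp hn
      obtain ⟨c, hc⟩ := G.pick {a, b} (Finset.card_le_two.trans_lt (by norm_num))
      simp only [Finset.mem_insert, Finset.mem_singleton, not_or] at hc
      obtain ⟨σ, s0, s1, -, h, -⟩ := G.main h0 (a := a) (b := b) (c := c)
        hab (Ne.symm hc.1) (Ne.symm hc.2)
      refine ⟨σ, ?_, h⟩
      simp [F2, s0, s1, Finset.map_insert]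
    · obtain ⟨a, b, c, hab, hac, hbc, rfl⟩ := Finset.card_eq_three.mp hn
      obtain ⟨σ, s0, s1, s2, h, -⟩ := G.main h0 (a := a) (b := b) (c := c) hab hac hbc
      refine ⟨σ, ?_, h⟩
      simp [F3, s0, s1, s2, Finset.map_insert]
    · have hw : wd D 6 u = ∅ := by
        rcases hu with h | h
        · omega
        · exact h.2
      obtain ⟨d, t, hd, rfl, ht⟩ := Finset.card_eq_succ.mp hn
      obtain ⟨a, b, c, hab, hac, hbc, rfl⟩ := Finset.card_eq_three.mp ht
      simp only [Finset.mem_insert, Finset.mem_singleton, not_or] at hd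
      obtain ⟨σ, s0, s1, s2, h, h4⟩ := G.main h0 (a := a) (b := b) (c := c) hab hac hbc
      have s3 := h4 d hd.1 hd.2.1 hd.2.2 hw
      refine ⟨σ, ?_, h⟩
      rw [set_rot]
      simp [F4, s0, s1, s2, ← s3, Finset.map_insert]
  exact key _ rfl

def aff (σ : Equiv.Perm (Fin 16)) (c : V) : Equiv.Perm V where
  toFun x := (fun i => x (σ.symm i)) + c
  invFun x := fun i => (x + c) (σ i)
  left_inv x := by
    funext i
    change ((fun i => x (σ.symm i)) + c + c) (σ i) = x i
    rw [addv]; simp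
  right_inv x := by
    have : (fun i => (x + c) (σ (σ.symm i))) = x + c := by funext i; simp
    change (fun i => (x + c) (σ (σ.symm i))) + c = x
    rw [this, addv]

lemma aff_ind (σ : Equiv.Perm (Fin 16)) (c : V) (s : Finset (Fin 16)) :
    aff σ c (ind s) = ind (s.map σ.toEmbedding) + c := by
  change (fun i => ind s (σ.symm i)) + c = _
  congr 1
  funext i
  obtain ⟨j, rfl⟩ := σ.surjective i
  simp [ind]

lemma normal (C : Set V) (hC : C.Nonempty) (hreg : IsCompletelyRegular C) (hd : IsMinDist C 6) (x : V) :
    ∃ σ c, (∀ w, aff σ c w ∈ C ↔ ∃ n ∈ NRl, S n = supp w) ∧ aff σ c (ind (F (distToCode C x))) = x := by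
  obtain ⟨L, N, hG⟩ := good C hreg hd
  obtain ⟨c, hc, hxc⟩ := dist_ex hC x
  have G := hG c
  have h0 : ∅ ∈ Dc C c := by
    rw [mem_Dc]
    have : ind ∅ = 0 := by funext i; simp [ind]
    rwa [this, zero_add]
  obtain rfl := G.L4 h0
  obtain ⟨u, rfl⟩ := ex_ind x c
  have hmin : ∀ B ∈ Dc C c, distToCode C (ind u + c) ≤ (u ∆ B).card := by
    intro B hB
    rw [← hdist u B c]
    exact dist_le (mem_Dc.mp hB)
  have hu : u.card = distToCode C (ind u + c) := by
    rw [← hxc]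
    have := hdist u ∅ c
    rw [sde] at this
    rw [← this]
    have : ind ∅ = 0 := by funext i; simp [ind]
    rw [this, zero_add]
  rw [← hu] at hmin ⊢
  have hcov : ∀ x ⊆ u, x.card = 4 → wd (Dc C c) 6 x = ∅ := by
    intro x hx hx4
    by_contra hne
    obtain ⟨B, hB⟩ := Finset.nonempty_iff_ne_empty.mpr hne
    rw [mem_wd] at hB
    have h1 := hmin B hB.1
    have h2 := sd u B
    have h3 := Finset.card_le_card (Finset.subset_inter hx hB.2.2)
    omega
  have hcase : u.card ≤ 3 ∨ (u.card = 4 ∧ wd (Dc C c) 6 u = ∅) := by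
    by_cases h3 : u.card ≤ 3
    · exact Or.inl h3
    by_cases h4 : u.card = 4
    · exact Or.inr ⟨h4, hcov u subset_rfl h4⟩
    exfalso
    obtain ⟨x, hx, hx4, hne⟩ := G.coverQ h0 (u := u) (by omega)
    exact hne.ne_empty (hcov x hx hx4)
  obtain ⟨σ, h1, h2⟩ := ex_frame G h0 u hcase
  refine ⟨σ, c, ?_, ?_⟩
  · intro w
    rw [← h2, mem_Dc, ← aff_ind, ind_supp]
  · rw [aff_ind, h1]

lemma aut_aff (σ c) : IsHammingAut (aff σ c) := ⟨σ, c, fun _ => rfl⟩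

lemma aut_iff {f : Equiv.Perm V} : IsHammingAut f ↔ ∃ σ c, f = aff σ c := by
  constructor
  · rintro ⟨σ, c, h⟩
    exact ⟨σ, c, Equiv.ext h⟩
  · rintro ⟨σ, c, rfl⟩
    exact aut_aff σ c

lemma aut_mul {f g : Equiv.Perm V} (hf : IsHammingAut f) (hg : IsHammingAut g) : IsHammingAut (f * g) := by
  obtain ⟨σ, v, h⟩ := hf
  obtain ⟨τ, w, h'⟩ := hg
  refine ⟨σ * τ, (fun i => w (σ.symm i)) + v, fun x => ?_⟩
  rw [Equiv.Perm.mul_apply, h, h']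
  funext i
  simp [add_assoc]
  rfl

lemma aut_inv {f : Equiv.Perm V} (hf : IsHammingAut f) : IsHammingAut f⁻¹ := by
  obtain ⟨σ, c, rfl⟩ := aut_iff.mp hf
  refine ⟨σ⁻¹, fun i => c (σ i), fun x => ?_⟩
  rfl

lemma aut_one : IsHammingAut (1 : Equiv.Perm V) := ⟨1, 0, fun x => by simp; rfl⟩

lemma aut_dist {f : Equiv.Perm V} (hf : IsHammingAut f) (x y : V) :
    hammingDist (f x) (f y) = hammingDist x y := by
  obtain ⟨σ, v, h⟩ := hf
  rw [h, h]
  unfold hammingDist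
  symm
  apply Finset.card_equiv σ
  intro i
  simp

lemma aut_code {C : Set V} {f : Equiv.Perm V} (hf : IsHammingAut f) (hC : f '' C = C) (x : V) :
    distToCode C (f x) = distToCode C x := by
  unfold distToCode
  congr 1
  ext d
  constructor
  · rintro ⟨c, hc, rfl⟩
    rw [← hC] at hc
    obtain ⟨c', hc', rfl⟩ := hc
    exact ⟨c', hc', (aut_dist hf _ _).symm⟩
  · rintro ⟨c, hc, rfl⟩
    refine ⟨f c, ?_, aut_dist hf _ _⟩
    rw [← hC]; exact ⟨c, hc, rfl⟩

def X (C : Set V) : Subgroup (Equiv.Perm V) where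
  carrier := {f | IsHammingAut f ∧ f '' C = C}
  mul_mem' := by
    rintro f g ⟨hf, hf'⟩ ⟨hg, hg'⟩
    refine ⟨aut_mul hf hg, ?_⟩
    rw [Equiv.Perm.coe_mul, Set.image_comp, hg', hf']
  one_mem' := ⟨aut_one, by simp⟩
  inv_mem' := by
    rintro f ⟨hf, hf'⟩
    refine ⟨aut_inv hf, ?_⟩
    conv_lhs => rw [← hf']
    rw [← Set.image_comp]
    simp

theorem final (C : Set V) (hC : C.Nonempty)
    (hreg : IsCompletelyRegular C) (hd : IsMinDist C 6) : IsCompletelyTransitive C := by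
  refine ⟨X C, fun g hg => hg, ?_⟩
  rintro i x rfl
  ext y
  simp only [Set.mem_ofPred_eq]
  constructor
  · intro hy
    obtain ⟨σ, c, h1, h2⟩ := normal C hC hreg hd x
    obtain ⟨τ, d, h3, h4⟩ := normal C hC hreg hd y
    rw [hy] at h4
    have hx : (aff σ c)⁻¹ x = ind (F (distToCode C x)) := by
      rw [Equiv.Perm.inv_eq_iff_eq]; exact h2.symm
    have hmem : ∀ z, (aff τ d * (aff σ c)⁻¹) z ∈ C ↔ z ∈ C := by
      intro z
      rw [Equiv.Perm.mul_apply, h3, ← h1]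
      exact iff_of_eq (congrArg (· ∈ C) ((aff σ c).apply_symm_apply z))
    refine ⟨aff τ d * (aff σ c)⁻¹, ⟨aut_mul (aut_aff _ _) (aut_inv (aut_aff _ _)), ?_⟩, ?_⟩
    · ext z
      constructor
      · rintro ⟨w, hw, rfl⟩
        exact (hmem w).mpr hw
      · intro hz
        obtain ⟨w, rfl⟩ := (aff τ d * (aff σ c)⁻¹).surjective z
        exact ⟨w, (hmem w).mp hz, rfl⟩
    · rw [Equiv.Perm.mul_apply, hx, h4]
  · rintro ⟨g, hg, rfl⟩
    exact aut_code hg.1 hg.2 x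

end NR

/-- Every binary completely regular code of length 16 with minimum distance 6 is
completely transitive. -/
theorem stmt_2 (C : Set (Fin 16 → ZMod 2)) (hC : C.Nonempty)
    (hreg : IsCompletelyRegular C) (hd : IsMinDist C 6) :
    IsCompletelyTransitive C := by
  exact NR.final C hC hreg hd
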